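/- Hadwiger's classification theorem: let φ ∈ Val(ℝⁿ) be a translation invariant continuous valuation that is invariant under rotations, i.e., φ(gK) = φ(K) for all g ∈ SO(n) and K ∈ K(ℝⁿ). Then there exist constants c_0, …, c_n ∈ ℂ such that φ(K) = Σ_{i=0}^n c_i V_i(K) for all K ∈ K(ℝⁿ). In particular, every such φ is automatically O(n)-invariant. -/

import Mathlib

/-!
The proof follows Klain's approach to Hadwiger's theorem, with a different treatment of its
central step.

Evaluating the Steiner polynomial at `ε = 1, …, n + 1` and inverting a Vandermonde matrix expresses
every `V_i` as a linear combination of volumes of parallel sets (`exists_coeff`). These are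
continuous `O(n)`-invariant valuations (`TV.parVol`), so the `V_i` are as well. They are linearly
independent, since `V_i` of a ball of radius `r` is a nonzero multiple of `r ^ i`.

The main point is uniqueness (`TV.eq_zero`): a continuous valuation that is invariant under
translations and rotations and vanishes on the unit cubes of dimensions `0, …, n` is zero. It implies
that the square matrix of the values of the `V_i` on these cubes is invertible, so that some linear
combination of the `V_i` agrees with `φ` on the cubes, and hence everywhere.

For uniqueness, induction on `k` shows that `φ` vanishes on bodies in `k`-dimensional subspaces: by
the preceding step `φ` is simple there, i.e. it vanishes on bodies of smaller dimension, and
`ZV.eq_zero` deals with simple valuations. Its proof is again an induction on dimension: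

* If `B` is orthogonal to a proper subspace `E`, then `A ↦ φ (A + B)` is a simple invariant valuation
  on `E`. Using this for each of the two summands, `φ` vanishes on all orthogonal sums `A + B` of
  bodies in nonzero subspaces.
* A simple valuation with this property is Minkowski additive on polytopes (`polyAdd_of_HV`). Indeed
  it vanishes on vertical cylinders, so the value of a polytope is a sum over its lower and upper
  facets of the values of the wedges between a facet and a horizontal hyperplane. For a fixed slope,
  the latter are a simple valuation of the projection of the facet, to which the same argument
  applies in one dimension less; and the facets of a Minkowski sum are the sums of the corresponding
  faces (`polyAdd_step`).
* By continuity `φ` is Minkowski additive on all bodies, and homogeneous of degree one. Replacing a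
  body by means of its rotated copies does not change `φ`, and the limit is a ball (`exists_ball`).
  As `φ` vanishes on a cube, it vanishes on balls, and therefore on every body.

Throughout, valuations are extended to functions on all sets, with the empty set allowed in the
valuation identity, and rotation invariance is expressed by invariance under products of two
hyperplane reflections.
-/

open scoped NNReal Pointwise
open Metric MeasureTheory

/-- The singleton convex body `{x}`. -/
def ConvexBody.singletonBody {V : Type*} [NormedAddCommGroup V] [NormedSpace ℝ V] (x : V) :
    ConvexBody V :=
  ⟨{x}, convex_singleton x, isCompact_singleton, Set.singleton_nonempty x⟩

/-- `φ` satisfies the valuation property: `φ(A ∪ B) = φ(A) + φ(B) - φ(A ∩ B)` whenever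
`A`, `B` and `A ∪ B` are convex bodies. -/
def IsValuation {V : Type*} [NormedAddCommGroup V] [NormedSpace ℝ V]
    (φ : ConvexBody V → ℂ) : Prop :=
  ∀ A B C D : ConvexBody V, (C : Set V) = (A : Set V) ∪ (B : Set V) →
    (D : Set V) = (A : Set V) ∩ (B : Set V) → φ C = φ A + φ B - φ D

/-- `φ` is translation invariant. -/
def IsTranslationInvariant {V : Type*} [NormedAddCommGroup V] [NormedSpace ℝ V]
    (φ : ConvexBody V → ℂ) : Prop :=
  ∀ (K : ConvexBody V) (x : V), φ (K + ConvexBody.singletonBody x) = φ K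

/-- `φ ∈ Val(V)`: a translation invariant valuation, continuous in the Hausdorff metric. -/
def MemVal {V : Type*} [NormedAddCommGroup V] [NormedSpace ℝ V]
    (φ : ConvexBody V → ℂ) : Prop :=
  IsValuation φ ∧ IsTranslationInvariant φ ∧ Continuous φ

/-- `φ` is homogeneous of degree `i`: `φ (λ • K) = λ ^ i * φ K` for all `λ ≥ 0`. -/
def IsHomogeneousVal {V : Type*} [NormedAddCommGroup V] [NormedSpace ℝ V]
    (φ : ConvexBody V → ℂ) (i : ℕ) : Prop :=
  ∀ (c : ℝ≥0) (K : ConvexBody V), φ (c • K) = ((c : ℝ) : ℂ) ^ i * φ K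

/-- Image of a convex body under a linear map (in finite dimensions). -/
noncomputable def ConvexBody.mapLin {V : Type*} [NormedAddCommGroup V] [NormedSpace ℝ V]
    [FiniteDimensional ℝ V] (f : V →ₗ[ℝ] V) (K : ConvexBody V) : ConvexBody V :=
  ⟨f '' (K : Set V), K.convex.linear_image f,
    K.isCompact.image f.continuous_of_finiteDimensional, K.nonempty.image f⟩

/-- The closed unit ball as a convex body. -/
noncomputable def unitBallBody (V : Type*) [NormedAddCommGroup V] [NormedSpace ℝ V]
    [FiniteDimensional ℝ V] : ConvexBody V :=
  ⟨closedBall 0 1, convex_closedBall 0 1, isCompact_closedBall 0 1,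
    Metric.nonempty_closedBall.mpr zero_le_one⟩

namespace Hadwiger

set_option linter.unusedSectionVars false

universe u

/-! ### Compact convex sets and simple valuations -/

/-- Compact convex sets; unlike for `ConvexBody`, the empty set is allowed. -/
def CB {W : Type*} [NormedAddCommGroup W] [NormedSpace ℝ W] (A : Set W) : Prop :=
  Convex ℝ A ∧ IsCompact A

/-- Simple translation invariant valuations, as functions on all sets which are only constrained on
compact convex ones. Simplicity means vanishing on sets contained in a hyperplane. -/
structure SV {W : Type*} [NormedAddCommGroup W] [NormedSpace ℝ W] (φ : Set W → ℂ) : Prop where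
  empty : φ ∅ = 0
  val : ∀ A B, CB A → CB B → Convex ℝ (A ∪ B) → φ (A ∪ B) + φ (A ∩ B) = φ A + φ B
  trans : ∀ A x, CB A → φ ((fun y => x + y) '' A) = φ A
  simple : ∀ A (f : W →ₗ[ℝ] ℝ) (a : ℝ), CB A → f ≠ 0 → (∀ x ∈ A, f x = a) → φ A = 0

section Basic
variable {W : Type*} [NormedAddCommGroup W] [NormedSpace ℝ W]
variable {W' : Type*} [NormedAddCommGroup W'] [NormedSpace ℝ W']

theorem CB.inter {A B : Set W} (hA : CB A) (hB : CB B) : CB (A ∩ B) :=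
  ⟨hA.1.inter hB.1, hA.2.inter hB.2⟩

theorem CB.inter_closed {A B : Set W} (hA : CB A) (hB : Convex ℝ B) (hB' : IsClosed B) :
    CB (A ∩ B) :=
  ⟨hA.1.inter hB, hA.2.inter_right hB'⟩

theorem CB.add {A B : Set W} (hA : CB A) (hB : CB B) : CB (A + B) :=
  ⟨hA.1.add hB.1, hA.2.add hB.2⟩

theorem CB.image [FiniteDimensional ℝ W] {A : Set W} (hA : CB A) (f : W →ₗ[ℝ] W') :
    CB (f '' A) :=
  ⟨hA.1.linear_image f, hA.2.image f.continuous_of_finiteDimensional⟩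

theorem CB.smul {A : Set W} (hA : CB A) (c : ℝ) : CB (c • A) :=
  ⟨hA.1.smul c, hA.2.smul c⟩

theorem CB.translate {A : Set W} (hA : CB A) (x : W) : CB ((fun y => x + y) '' A) :=
  ⟨by simpa using hA.1.translate x, hA.2.image (by fun_prop)⟩

theorem CB.singleton (x : W) : CB ({x} : Set W) := ⟨convex_singleton x, isCompact_singleton⟩

theorem CB.hull {S : Set W} (hS : S.Finite) : CB (convexHull ℝ S) :=
  ⟨convex_convexHull ℝ S, hS.isCompact_convexHull ℝ⟩

theorem CB.prod {A : Set W} {B : Set W'} (hA : CB A) (hB : CB B) : CB (A ×ˢ B) :=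
  ⟨hA.1.prod hB.1, hA.2.prod hB.2⟩

theorem CB.Icc (a b : ℝ) : CB (Set.Icc a b) := ⟨convex_Icc a b, isCompact_Icc⟩

/-- A simple valuation is additive under cutting by a hyperplane. -/
theorem SV.cut [FiniteDimensional ℝ W] {φ : Set W → ℂ} (hφ : SV φ) {K : Set W} (hK : CB K)
    {f : W →ₗ[ℝ] ℝ} (hf : f ≠ 0) (a : ℝ) :
    φ K = φ (K ∩ {x | f x ≤ a}) + φ (K ∩ {x | a ≤ f x}) := by
  have hc : Continuous f := f.continuous_of_finiteDimensional
  have h1 : CB (K ∩ {x | f x ≤ a}) :=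
    hK.inter_closed (convex_halfSpace_le f.isLinear a) (isClosed_le hc continuous_const)
  have h2 : CB (K ∩ {x | a ≤ f x}) :=
    hK.inter_closed (convex_halfSpace_ge f.isLinear a) (isClosed_le continuous_const hc)
  have hu : (K ∩ {x | f x ≤ a}) ∪ (K ∩ {x | a ≤ f x}) = K := by
    ext x
    have := le_total (f x) a
    simp only [Set.mem_union, Set.mem_inter_iff, Set.mem_ofPred_eq]
    tauto
  have h3 := hφ.val _ _ h1 h2 (by rw [hu]; exact hK.1)
  rw [hu, hφ.simple _ f a (h1.inter h2) hf, add_zero] at h3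
  · exact h3
  · rintro x ⟨⟨_, hx⟩, ⟨_, hx2⟩⟩
    exact le_antisymm hx hx2

/-- Additivity of a simple valuation over the cells of the domains of linearity of a maximum of
finitely many affine functions. -/
theorem SV.power [FiniteDimensional ℝ W] {φ : Set W → ℂ} (hφ : SV φ) {ι : Type*}
    (l : ι → W →ₗ[ℝ] ℝ) (c : ι → ℝ) (hl : Function.Injective l) (G : Finset ι) (hG : G.Nonempty) :
    ∀ K, CB K → φ K = ∑ i ∈ G, φ (K ∩ {x | ∀ j ∈ G, l j x - c j ≤ l i x - c i}) := by
  classical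
  have hC : ∀ (s : Finset ι) (i : ι) (K : Set W), CB K →
      CB (K ∩ {x | ∀ j ∈ s, l j x - c j ≤ l i x - c i}) := by
    intro s i K hK
    have : {x | ∀ j ∈ s, l j x - c j ≤ l i x - c i} =
        ⋂ j ∈ s, {x | (l j - l i) x ≤ c j - c i} := by
      ext x
      simp only [Set.mem_ofPred_eq, Set.mem_iInter, LinearMap.sub_apply]
      refine forall₂_congr fun j _ => ?_
      constructor <;> intro h <;> linarith
    rw [this]
    refine hK.inter_closed (convex_iInter₂ fun j _ => convex_halfSpace_le (l j - l i).isLinear _)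
      (isClosed_biInter fun j _ => isClosed_le (l j - l i).continuous_of_finiteDimensional
        continuous_const)
  induction hG using Finset.Nonempty.cons_induction with
  | singleton a => intro K hK; simp
  | cons a s ha hs ih =>
    intro K hK
    rw [Finset.sum_cons]
    have hKa := hC (Finset.cons a s ha) a K hK
    have e1 : φ (K ∩ {x | ∀ j ∈ Finset.cons a s ha, l j x - c j ≤ l a x - c a}) =
        ∑ i ∈ s, φ (K ∩ {x | ∀ j ∈ s, l j x - c j ≤ l i x - c i} ∩
          {x | c a - c i ≤ (l a - l i) x}) := by
      rw [ih _ hKa]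
      refine Finset.sum_congr rfl fun i hi => congrArg φ ?_
      ext x
      simp only [Set.mem_inter_iff, Set.mem_ofPred_eq, Finset.mem_cons, LinearMap.sub_apply,
        forall_eq_or_imp]
      constructor
      · rintro ⟨⟨h1, h2, h3⟩, h4⟩
        exact ⟨⟨h1, h4⟩, by have := h3 i hi; linarith⟩
      · rintro ⟨⟨h1, h4⟩, h5⟩
        exact ⟨⟨h1, le_rfl, fun j hj => by have := h4 j hj; linarith⟩, h4⟩
    rw [e1, ih K hK, ← Finset.sum_add_distrib]
    refine Finset.sum_congr rfl fun i hi => ?_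
    have hne : l a - l i ≠ 0 := by
      intro h
      have := hl (sub_eq_zero.mp h)
      exact ha (this ▸ hi)
    rw [hφ.cut (hC s i K hK) hne (c a - c i), add_comm]
    congr 2
    ext x
    simp only [Set.mem_inter_iff, Set.mem_ofPred_eq, Finset.mem_cons, LinearMap.sub_apply,
        forall_eq_or_imp]
    constructor
    · rintro ⟨⟨h1, h2⟩, h3⟩
      exact ⟨h1, by linarith, h2⟩
    · rintro ⟨h1, h2, h3⟩
      exact ⟨⟨h1, h3⟩, by linarith⟩

end Basic

/-! ### Polytopes as intersections of half-spaces -/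

section MinkowskiWeyl
variable {V : Type*} [AddCommGroup V] [Module ℝ V]

/-- Fourier–Motzkin elimination: a finitely generated cone is cut out by finitely many linear
inequalities. -/
theorem cone_polyhedral [FiniteDimensional ℝ V] (S : Finset V) :
    ∃ F : Finset (V →ₗ[ℝ] ℝ), ∀ y : V,
      (∃ c : V → ℝ, (∀ s ∈ S, 0 ≤ c s) ∧ ∑ s ∈ S, c s • s = y) ↔ ∀ f ∈ F, 0 ≤ f y := by
  classical
  induction S using Finset.induction with
  | empty =>
    let b := Module.finBasis ℝ V
    refine ⟨Finset.univ.image (fun i => b.coord i) ∪ Finset.univ.image (fun i => -b.coord i),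
      fun y => ?_⟩
    simp only [Finset.notMem_empty, false_imp_iff, implies_true, Finset.sum_empty, true_and,
      exists_const, Finset.mem_union, Finset.mem_image, Finset.mem_univ]
    constructor
    · rintro rfl
      simp
    · intro h
      symm
      rw [← b.forall_coord_eq_zero_iff]
      intro i
      have h1 := h (b.coord i) (Or.inl ⟨i, rfl⟩)
      have h2 := h (-b.coord i) (Or.inr ⟨i, rfl⟩)
      rw [LinearMap.neg_apply] at h2
      linarith
  | insert v S hv ih =>
    obtain ⟨F, hF⟩ := ih
    refine ⟨(F.filter fun f => 0 ≤ f v) ∪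
      ((F ×ˢ F).filter fun q => 0 < q.1 v ∧ q.2 v < 0).image
        (fun q => q.1 v • q.2 - q.2 v • q.1), fun y => ?_⟩
    have key : (∃ c : V → ℝ, (∀ s ∈ insert v S, 0 ≤ c s) ∧ ∑ s ∈ insert v S, c s • s = y) ↔
        ∃ t : ℝ, 0 ≤ t ∧ ∀ f ∈ F, t * f v ≤ f y := by
      constructor
      · rintro ⟨c, hc, hy⟩
        refine ⟨c v, hc v (Finset.mem_insert_self _ _), ?_⟩
        rw [Finset.sum_insert hv] at hy
        have := (hF (∑ s ∈ S, c s • s)).1 ⟨c, fun s hs => hc s (Finset.mem_insert_of_mem hs), rfl⟩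
        intro f hf
        have h2 := this f hf
        rw [← hy, map_add, map_smul, smul_eq_mul]
        linarith
      · rintro ⟨t, ht, h⟩
        obtain ⟨c, hc, hy⟩ := (hF (y - t • v)).2 (fun f hf => by
          rw [map_sub, map_smul, smul_eq_mul]; linarith [h f hf])
        refine ⟨Function.update c v t, ?_, ?_⟩
        · intro s hs
          rcases eq_or_ne s v with rfl | hne
          · simpa using ht
          · simpa [hne] using hc s ((Finset.mem_insert.1 hs).resolve_left hne)
        · rw [Finset.sum_insert hv, Function.update_self, Finset.sum_congr rfl (g := fun s => c s • s),
            hy]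
          · abel
          · intro s hs
            rw [Function.update_of_ne (ne_of_mem_of_not_mem hs hv)]
    rw [key]
    constructor
    · rintro ⟨t, ht, h⟩ f hf
      rcases Finset.mem_union.1 hf with hf | hf
      · obtain ⟨h1, h2⟩ := Finset.mem_filter.1 hf
        exact (mul_nonneg ht h2).trans (h f h1)
      · obtain ⟨⟨f1, f2⟩, hq, rfl⟩ := Finset.mem_image.1 hf
        simp only [Finset.mem_filter, Finset.mem_product] at hq
        obtain ⟨⟨hf1, hf2⟩, h1, h2⟩ := hq
        simp only [LinearMap.sub_apply, LinearMap.smul_apply, smul_eq_mul]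
        nlinarith [mul_le_mul_of_nonneg_left (h f2 hf2) h1.le,
          mul_le_mul_of_nonneg_left (h f1 hf1) (neg_nonneg.2 h2.le)]
    · intro h
      -- The lower bounds on `t` are `0` and `f y / f v` for `f v < 0`.
      let L : Finset ℝ := insert 0 ((F.filter fun f => f v < 0).image fun f => f y / f v)
      have hL : L.Nonempty := ⟨0, Finset.mem_insert_self _ _⟩
      refine ⟨L.max' hL, L.le_max' _ (Finset.mem_insert_self _ _), fun f hf => ?_⟩
      rcases lt_trichotomy (f v) 0 with hfv | hfv | hfv
      · have : f y / f v ≤ L.max' hL := L.le_max' _ (Finset.mem_insert_of_mem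
          (Finset.mem_image_of_mem _ (Finset.mem_filter.2 ⟨hf, hfv⟩)))
        rwa [div_le_iff_of_neg hfv] at this
      · rw [hfv, mul_zero]
        exact h f (Finset.mem_union_left _ (Finset.mem_filter.2 ⟨hf, hfv.ge⟩))
      · rw [← le_div_iff₀ hfv]
        refine L.max'_le hL _ fun r hr => ?_
        rcases Finset.mem_insert.1 hr with rfl | hr
        · exact div_nonneg (h f (Finset.mem_union_left _ (Finset.mem_filter.2 ⟨hf, hfv.le⟩))) hfv.le
        · obtain ⟨g, hg, rfl⟩ := Finset.mem_image.1 hr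
          obtain ⟨hg, hgv⟩ := Finset.mem_filter.1 hg
          have := h (f v • g - g v • f) (Finset.mem_union_right _ (Finset.mem_image.2
            ⟨(f, g), Finset.mem_filter.2 ⟨Finset.mk_mem_product hf hg, hfv, hgv⟩, rfl⟩))
          simp only [LinearMap.sub_apply, LinearMap.smul_apply, smul_eq_mul] at this
          rw [div_le_iff_of_neg hgv, div_mul_eq_mul_div, div_le_iff₀ hfv]
          linarith

/-- A polytope is an intersection of finitely many half-spaces. -/
theorem polytope_halfspaces [FiniteDimensional ℝ V] (S : Finset V) :
    ∃ F : Finset ((V →ₗ[ℝ] ℝ) × ℝ), ∀ y : V,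
      y ∈ convexHull ℝ (S : Set V) ↔ ∀ f ∈ F, 0 ≤ f.1 y + f.2 := by
  classical
  obtain ⟨F, hF⟩ := cone_polyhedral (S.image fun s => ((s, 1) : V × ℝ))
  refine ⟨F.image fun f => (f ∘ₗ LinearMap.inl ℝ V ℝ, f (0, 1)), fun y => ?_⟩
  have h1 : ∀ f : V × ℝ →ₗ[ℝ] ℝ, (f ∘ₗ LinearMap.inl ℝ V ℝ) y + f (0, 1) = f (y, 1) := by
    intro f
    rw [LinearMap.comp_apply, ← map_add]
    simp
  simp only [Finset.mem_image, forall_exists_index, and_imp, forall_apply_eq_imp_iff₂, h1]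
  rw [← hF, Finset.mem_convexHull']
  have hinj : Set.InjOn (fun s : V => ((s, 1) : V × ℝ)) (S : Set V) := fun a _ b _ h =>
    congrArg Prod.fst h
  constructor
  · rintro ⟨w, hw, hw1, hy⟩
    refine ⟨fun z => w z.1, ?_, ?_⟩
    · rintro s hs
      obtain ⟨a, ha, rfl⟩ := Finset.mem_image.1 hs
      exact hw a ha
    · rw [Finset.sum_image hinj]
      ext
      · simp [Prod.fst_sum, hy]
      · simp [Prod.snd_sum, hw1]
  · rintro ⟨c, hc, hy⟩
    rw [Finset.sum_image hinj] at hy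
    refine ⟨fun s => c (s, 1), fun s hs => hc _ (Finset.mem_image_of_mem _ hs), ?_, ?_⟩
    · simpa [Prod.snd_sum] using congrArg Prod.snd hy
    · simpa [Prod.fst_sum] using congrArg Prod.fst hy

end MinkowskiWeyl

/-! ### Minkowski additivity by slicing into wedges over lower facets -/

section Transport
variable {W : Type*} [NormedAddCommGroup W] [NormedSpace ℝ W] [FiniteDimensional ℝ W]
variable {W' : Type*} [NormedAddCommGroup W'] [NormedSpace ℝ W'] [FiniteDimensional ℝ W']

theorem SV.comp_equiv {φ : Set W → ℂ} (hφ : SV φ) (e : W' ≃ₗ[ℝ] W) :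
    SV (fun A : Set W' => φ (e '' A)) where
  empty := by simpa using hφ.empty
  val A B hA hB hAB := by
    have h := hφ.val (e '' A) (e '' B) (hA.image e.toLinearMap) (hB.image e.toLinearMap)
      (by rw [← Set.image_union]; exact hAB.linear_image e.toLinearMap)
    rwa [← Set.image_union, ← Set.image_inter e.injective] at h
  trans A x hA := by
    have h := hφ.trans (e '' A) (e x) (hA.image e.toLinearMap)
    rw [← h, Set.image_image, Set.image_image]
    simp
  simple A f a hA hf h := by
    refine hφ.simple _ (f ∘ₗ e.symm.toLinearMap) a (hA.image e.toLinearMap) ?_ ?_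
    · intro h0
      apply hf
      ext x
      simpa using LinearMap.congr_fun h0 (e x)
    · rintro _ ⟨x, hx, rfl⟩
      simpa using h x hx

/-- Minkowski additivity on polytopes. -/
def PolyAdd (φ : Set W → ℂ) : Prop :=
  ∀ S T : Finset W, S.Nonempty → T.Nonempty →
    φ (convexHull ℝ (S : Set W) + convexHull ℝ (T : Set W)) =
      φ (convexHull ℝ (S : Set W)) + φ (convexHull ℝ (T : Set W))

theorem PolyAdd.of_comp_equiv {φ : Set W → ℂ} (e : W' ≃ₗ[ℝ] W)
    (h : PolyAdd (fun A : Set W' => φ (e '' A))) : PolyAdd φ := by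
  classical
  intro S T hS hT
  have h1 := h (S.image e.symm) (T.image e.symm) (hS.image _) (hT.image _)
  have key : ∀ S : Finset W, e '' (convexHull ℝ ((S.image e.symm : Finset W') : Set W')) =
      convexHull ℝ (S : Set W) := by
    intro S
    have := LinearMap.image_convexHull (𝕜 := ℝ) e.toLinearMap
      ((S.image e.symm : Finset W') : Set W')
    rw [LinearEquiv.coe_coe] at this
    rw [this, Finset.coe_image, Set.image_image]
    simp
  simp only [Set.image_add, key] at h1
  exact h1

end Transport

section Step
variable {W : Type*} [NormedAddCommGroup W] [NormedSpace ℝ W] [FiniteDimensional ℝ W]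

/-- The part below height `N` of the union of all upward vertical rays from `P`. -/
def up (P : Set (W × ℝ)) (N : ℝ) : Set (W × ℝ) :=
  {z | ∃ t, (z.1, t) ∈ P ∧ t ≤ z.2 ∧ z.2 ≤ N}

/-- The part of the vertical cylinder over `C` between the graph of `p` and height `N`. -/
def wedge (p : W →ₗ[ℝ] ℝ) (C : Set W) (N : ℝ) : Set (W × ℝ) :=
  {z | z.1 ∈ C ∧ p z.1 ≤ z.2 ∧ z.2 ≤ N}

/-- The valuation of the wedges over `C` with slope `p`. When `φ` vanishes on vertical cylinders,
it does not depend on the height of the wedge, provided that it is at least the maximum of `p` on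
`C`. -/
noncomputable def lam (φ : Set (W × ℝ) → ℂ) (p : W →ₗ[ℝ] ℝ) (C : Set W) : ℂ :=
  φ (wedge p C (sSup (Set.image p C)))

/-- The projection to `W` of the face of `P` on which `p z.1 - z.2` is maximal. -/
def lowFace (p : W →ₗ[ℝ] ℝ) (P : Set (W × ℝ)) : Set W :=
  {x | ∃ t, (x, t) ∈ P ∧ ∀ w ∈ P, p w.1 - w.2 ≤ p x - t}

theorem CB.wedge {C : Set W} (hC : CB C) (p : W →ₗ[ℝ] ℝ) (N : ℝ) : CB (wedge p C N) := by
  obtain ⟨m, hm⟩ := (hC.2.image p.continuous_of_finiteDimensional).bddBelow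
  have : Hadwiger.wedge p C N = (C ×ˢ Set.Icc m N) ∩
      {z | (p ∘ₗ LinearMap.fst ℝ W ℝ - LinearMap.snd ℝ W ℝ) z ≤ 0} := by
    ext z
    simp only [Hadwiger.wedge, Set.mem_ofPred_eq, Set.mem_inter_iff, Set.mem_prod, Set.mem_Icc,
      LinearMap.sub_apply, LinearMap.comp_apply, LinearMap.fst_apply, LinearMap.snd_apply]
    constructor
    · rintro ⟨h1, h2, h3⟩
      exact ⟨⟨h1, (hm (Set.mem_image_of_mem p h1)).trans h2, h3⟩, by linarith⟩
    · rintro ⟨⟨h1, h2, h3⟩, h4⟩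
      exact ⟨h1, by linarith, h3⟩
  rw [this]
  exact (hC.prod (CB.Icc m N)).inter_closed (convex_halfSpace_le (LinearMap.isLinear _) _)
    (isClosed_le (LinearMap.continuous_of_finiteDimensional _) continuous_const)

theorem CB.up {P : Set (W × ℝ)} (hP : CB P) (N : ℝ) : CB (up P N) := by
  obtain ⟨m, hm⟩ := (hP.2.image continuous_snd).bddBelow
  have : Hadwiger.up P N = (P + ({0} : Set W) ×ˢ Set.Icc 0 (N - m)) ∩
      {z | LinearMap.snd ℝ W ℝ z ≤ N} := by
    ext z
    simp only [Hadwiger.up, Set.mem_ofPred_eq, Set.mem_inter_iff, LinearMap.snd_apply, Set.mem_add]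
    constructor
    · rintro ⟨t, h1, h2, h3⟩
      have := hm (Set.mem_image_of_mem Prod.snd h1)
      refine ⟨⟨(z.1, t), h1, (0, z.2 - t), ?_, by ext <;> simp⟩, h3⟩
      simp only [Set.mem_prod, Set.mem_singleton_iff, Set.mem_Icc, true_and]
      constructor <;> linarith
    · rintro ⟨⟨⟨x, t⟩, h1, ⟨y, s⟩, h2, rfl⟩, h3⟩
      simp only [Set.mem_prod, Set.mem_singleton_iff, Set.mem_Icc] at h2
      obtain ⟨rfl, h2, _⟩ := h2
      exact ⟨t, by simpa using h1, by simpa using h2, h3⟩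
  rw [this]
  exact (hP.add ((CB.singleton 0).prod (CB.Icc _ _))).inter_closed
    (convex_halfSpace_le (LinearMap.isLinear _) _)
    (isClosed_le (LinearMap.continuous_of_finiteDimensional _) continuous_const)

variable {φ : Set (W × ℝ) → ℂ}

/-- When `φ` vanishes on vertical cylinders, raising the top of a wedge adds a cylinder and does not
change its value. -/
theorem lam_indep (hφ : SV φ) (hcyl : ∀ A a b, CB A → φ (A ×ˢ Set.Icc a b) = 0)
    (p : W →ₗ[ℝ] ℝ) {C : Set W} (hC : CB C) {N : ℝ} (hN : ∀ x ∈ C, p x ≤ N) :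
    φ (wedge p C N) = lam φ p C := by
  unfold lam
  rcases C.eq_empty_or_nonempty with rfl | hne
  · simp [wedge]
  have hbd := (hC.2.image p.continuous_of_finiteDimensional).bddAbove
  set M := sSup (p '' C) with hM
  have hMN : M ≤ N := csSup_le (hne.image p) (by rintro _ ⟨x, hx, rfl⟩; exact hN x hx)
  have hpM : ∀ x ∈ C, p x ≤ M := fun x hx => le_csSup hbd (Set.mem_image_of_mem p hx)
  have hu : wedge p C M ∪ C ×ˢ Set.Icc M N = wedge p C N := by
    ext z
    simp only [wedge, Set.mem_union, Set.mem_ofPred_eq, Set.mem_prod, Set.mem_Icc]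
    constructor
    · rintro (⟨h1, h2, h3⟩ | ⟨h1, h2, h3⟩)
      · exact ⟨h1, h2, h3.trans hMN⟩
      · exact ⟨h1, (hpM _ h1).trans h2, h3⟩
    · rintro ⟨h1, h2, h3⟩
      rcases le_total z.2 M with h | h
      · exact Or.inl ⟨h1, h2, h⟩
      · exact Or.inr ⟨h1, h, h3⟩
  have hi : wedge p C M ∩ C ×ˢ Set.Icc M N = C ×ˢ Set.Icc M M := by
    ext z
    simp only [wedge, Set.mem_inter_iff, Set.mem_ofPred_eq, Set.mem_prod, Set.mem_Icc]
    constructor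
    · rintro ⟨⟨h1, h2, h3⟩, ⟨_, h5, h6⟩⟩
      exact ⟨h1, h5, h3⟩
    · rintro ⟨h1, h2, h3⟩
      exact ⟨⟨h1, (hpM _ h1).trans h2, h3⟩, h1, h2, h3.trans hMN⟩
  have := hφ.val (wedge p C M) (C ×ˢ Set.Icc M N) (hC.wedge p M) (hC.prod (CB.Icc M N))
    (by rw [hu]; exact (hC.wedge p N).1)
  rw [hu, hi, hcyl _ _ _ hC, hcyl _ _ _ hC] at this
  simpa using this

theorem CB.exists_bound {C : Set W} (hC : CB C) (p : W →ₗ[ℝ] ℝ) : ∃ N, ∀ x ∈ C, p x ≤ N := by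
  obtain ⟨N, hN⟩ := (hC.2.image p.continuous_of_finiteDimensional).bddAbove
  exact ⟨N, fun x hx => hN (Set.mem_image_of_mem p hx)⟩

theorem SV.lam (hφ : SV φ) (hcyl : ∀ A a b, CB A → φ (A ×ˢ Set.Icc a b) = 0)
    (p : W →ₗ[ℝ] ℝ) : SV (lam φ p) where
  empty := by simp [Hadwiger.lam, wedge, hφ.empty]
  val A B hA hB hAB := by
    have hU : CB (A ∪ B) := ⟨hAB, hA.2.union hB.2⟩
    obtain ⟨N, hN⟩ := hU.exists_bound p
    have hN1 : ∀ x ∈ A, p x ≤ N := fun x hx => hN x (Or.inl hx)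
    have hN2 : ∀ x ∈ B, p x ≤ N := fun x hx => hN x (Or.inr hx)
    rw [← lam_indep hφ hcyl p hU hN, ← lam_indep hφ hcyl p hA hN1, ← lam_indep hφ hcyl p hB hN2,
      ← lam_indep hφ hcyl p (hA.inter hB) (N := N) (fun x hx => hN1 x hx.1)]
    have e1 : wedge p (A ∪ B) N = wedge p A N ∪ wedge p B N := by
      ext z; simp only [wedge, Set.mem_union, Set.mem_ofPred_eq]; tauto
    have e2 : wedge p (A ∩ B) N = wedge p A N ∩ wedge p B N := by
      ext z; simp only [wedge, Set.mem_inter_iff, Set.mem_ofPred_eq]; tauto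
    rw [e1, e2]
    exact hφ.val _ _ (hA.wedge p N) (hB.wedge p N) (by rw [← e1]; exact (hU.wedge p N).1)
  trans A x hA := by
    obtain ⟨N, hN⟩ := hA.exists_bound p
    rw [← lam_indep hφ hcyl p hA hN, ← lam_indep hφ hcyl p (hA.translate x) (N := p x + N),
      ← hφ.trans _ (x, p x) (hA.wedge p N)]
    · congr 1
      ext z
      simp only [wedge, Set.mem_image, Set.mem_ofPred_eq]
      constructor
      · rintro ⟨⟨y, hy, hz⟩, h2, h3⟩
        rw [← hz, map_add] at h2
        exact ⟨(y, z.2 - p x), ⟨hy, by simp only; linarith, by simp only; linarith⟩,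
          by ext <;> simp [← hz]⟩
      · rintro ⟨⟨y, s⟩, ⟨h1, h2, h3⟩, rfl⟩
        simp only at h1 h2 h3
        exact ⟨⟨y, h1, rfl⟩, by simp [h2], by simp [h3]⟩
    · rintro _ ⟨y, hy, rfl⟩
      simpa using hN y hy
  simple A f a hA hf h := by
    refine hφ.simple _ (f ∘ₗ LinearMap.fst ℝ W ℝ) a (hA.wedge p _) ?_ ?_
    · intro h0
      apply hf
      ext x
      simpa using LinearMap.congr_fun h0 (x, 0)
    · rintro z ⟨hz, _⟩
      simpa using h z.1 hz

theorem lowFace_add (p : W →ₗ[ℝ] ℝ) (P Q : Set (W × ℝ)) :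
    lowFace p (P + Q) = lowFace p P + lowFace p Q := by
  ext x
  simp only [lowFace, Set.mem_ofPred_eq, Set.mem_add]
  constructor
  · rintro ⟨t, ⟨a, ha, b, hb, hab⟩, h⟩
    have h1 : a.1 + b.1 = x := congrArg Prod.fst hab
    have h2 : a.2 + b.2 = t := congrArg Prod.snd hab
    refine ⟨a.1, ⟨a.2, ha, fun w hw => ?_⟩, b.1, ⟨b.2, hb, fun w hw => ?_⟩, h1⟩
    · have := h (w + b) ⟨w, hw, b, hb, rfl⟩
      rw [← h1, ← h2, Prod.fst_add, Prod.snd_add, map_add, map_add] at this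
      linarith
    · have := h (a + w) ⟨a, ha, w, hw, rfl⟩
      rw [← h1, ← h2, Prod.fst_add, Prod.snd_add, map_add, map_add] at this
      linarith
  · rintro ⟨a, ⟨t, ha, h1⟩, b, ⟨s, hb, h2⟩, rfl⟩
    refine ⟨t + s, ⟨_, ha, _, hb, rfl⟩, ?_⟩
    rintro _ ⟨w, hw, v, hv, rfl⟩
    have := h1 w hw
    have := h2 v hv
    rw [Prod.fst_add, Prod.snd_add, map_add, map_add]
    linarith

theorem lowFace_hull (p : W →ₗ[ℝ] ℝ) (S : Finset (W × ℝ)) (hS : S.Nonempty) :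
    ∃ T : Finset W, T.Nonempty ∧
      lowFace p (convexHull ℝ (S : Set (W × ℝ))) = convexHull ℝ (T : Set W) := by
  classical
  let l : W × ℝ →ₗ[ℝ] ℝ := p ∘ₗ LinearMap.fst ℝ W ℝ - LinearMap.snd ℝ W ℝ
  have hl : ∀ z, l z = p z.1 - z.2 := fun z => rfl
  obtain ⟨s₀, hs₀, hmax⟩ := S.exists_max_image l hS
  have hmax' : ∀ w ∈ convexHull ℝ (S : Set (W × ℝ)), l w ≤ l s₀ := fun w hw =>
    convexHull_min (t := {w | l w ≤ l s₀}) (fun s hs => hmax s hs)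
      (convex_halfSpace_le l.isLinear _) hw
  refine ⟨(S.filter fun s => l s = l s₀).image Prod.fst,
    ⟨s₀.1, Finset.mem_image_of_mem _ (Finset.mem_filter.2 ⟨hs₀, rfl⟩)⟩, ?_⟩
  have him : convexHull ℝ (((S.filter fun s => l s = l s₀).image Prod.fst : Finset W) : Set W) =
      LinearMap.fst ℝ W ℝ '' convexHull ℝ ((S.filter fun s => l s = l s₀ : Finset _) :
        Set (W × ℝ)) := by
    rw [LinearMap.image_convexHull, Finset.coe_image]; rfl
  rw [him]
  ext x
  constructor
  · rintro ⟨t, ht, h⟩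
    refine ⟨(x, t), ?_, rfl⟩
    obtain ⟨w, hw, hw1, hx⟩ := Finset.mem_convexHull'.1 ht
    have hlx : l (x, t) = l s₀ :=
      le_antisymm (hmax' _ ht) (h s₀ (subset_convexHull ℝ _ hs₀))
    have hsum : ∑ s ∈ S, w s * (l s₀ - l s) = 0 := by
      have e : ∑ s ∈ S, w s * l s = l (x, t) := by rw [← hx, map_sum]; simp
      simp only [mul_sub, Finset.sum_sub_distrib, ← Finset.sum_mul, hw1, e, hlx]
      simp
    have hz := (Finset.sum_eq_zero_iff_of_nonneg (fun s hs =>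
      mul_nonneg (hw s hs) (sub_nonneg.2 (hmax s hs)))).1 hsum
    have hz' : ∀ s ∈ S, ¬ l s = l s₀ → w s = 0 := fun s hs hne =>
      (mul_eq_zero.1 (hz s hs)).resolve_right fun h => hne (by linarith)
    refine Finset.mem_convexHull'.2 ⟨w, fun s hs => hw s (Finset.mem_filter.1 hs).1, ?_, ?_⟩
    · rw [← hw1]
      exact Finset.sum_filter_of_ne fun s hs h => by_contra fun hc => h (hz' s hs hc)
    · rw [← hx]
      exact Finset.sum_filter_of_ne fun s hs h =>
        by_contra fun hc => h (by rw [hz' s hs hc, zero_smul])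
  · rintro ⟨z, hz, rfl⟩
    refine ⟨z.2, convexHull_mono (Finset.coe_subset.2 (Finset.filter_subset _ _)) hz,
      fun w hw => ?_⟩
    have h2 : l s₀ ≤ l z := convexHull_min (t := {w | l s₀ ≤ l w})
      (fun s hs => (Finset.mem_filter.1 hs).2.ge) (convex_halfSpace_ge l.isLinear _) hz
    exact (hmax' w hw).trans h2

/-- The valuation of `up P N`, for a polytope `P`, is the sum of the valuations of the wedges over
its lower facets; slopes which do not belong to a facet contribute zero. -/
theorem facet_sum (hφ : SV φ) (hcyl : ∀ A a b, CB A → φ (A ×ˢ Set.Icc a b) = 0)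
    (S : Finset (W × ℝ)) (hS : S.Nonempty) :
    ∃ G₀ : Finset (W →ₗ[ℝ] ℝ), ∀ G, G₀ ⊆ G → ∀ N,
      (∀ z ∈ convexHull ℝ (S : Set (W × ℝ)), z.2 ≤ N) →
      φ (up (convexHull ℝ (S : Set (W × ℝ))) N) =
        ∑ p ∈ G, lam φ p (lowFace p (convexHull ℝ (S : Set (W × ℝ)))) := by
  classical
  set P := convexHull ℝ (S : Set (W × ℝ)) with hPdef
  have hP : CB P := CB.hull S.finite_toSet
  have hPne : P.Nonempty := (Finset.coe_nonempty.2 hS).convexHull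
  obtain ⟨F, hF⟩ := polytope_halfspaces S
  -- The lower half-spaces of `P`, normalised as `z.2 ≥ p z.1 - const`.
  let slope : ((W × ℝ →ₗ[ℝ] ℝ) × ℝ) → W →ₗ[ℝ] ℝ :=
    fun f => (-(f.1 (0, 1))⁻¹) • (f.1 ∘ₗ LinearMap.inl ℝ W ℝ)
  refine ⟨insert 0 (F.image slope), fun G hG N hN => ?_⟩
  have hmax : ∀ p : W →ₗ[ℝ] ℝ, ∃ z ∈ P, ∀ w ∈ P, p w.1 - w.2 ≤ p z.1 - z.2 := by
    intro p
    obtain ⟨z, hz, h⟩ := hP.2.exists_isMaxOn hPne (f := fun w => p w.1 - w.2)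
      ((p.continuous_of_finiteDimensional.comp continuous_fst).sub continuous_snd).continuousOn
    exact ⟨z, hz, fun w hw => h hw⟩
  choose top htop htop' using hmax
  let c : (W →ₗ[ℝ] ℝ) → ℝ := fun p => p (top p).1 - (top p).2
  have hc : ∀ p, ∀ w ∈ P, p w.1 - c p ≤ w.2 := fun p w hw => by
    have := htop' p w hw
    simp only [c]; linarith
  have hkey : ∀ x s t₀, (x, t₀) ∈ P → (∀ p ∈ G, p x - c p ≤ s) → ∃ t ≤ s, (x, t) ∈ P := by
    intro x s t₀ ht₀ h
    refine ⟨min s t₀, min_le_left _ _, (hF _).2 fun f hf => ?_⟩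
    have hsplit : ∀ r : ℝ, f.1 (x, r) = f.1 (x, 0) + r * f.1 (0, 1) := by
      intro r
      rw [← smul_eq_mul, ← map_smul, ← map_add]
      simp
    have h0 := (hF _).1 ht₀ f hf
    rw [hsplit] at h0 ⊢
    rcases le_or_gt 0 (f.1 (0, 1)) with hb | hb
    · rcases le_total s t₀ with hst | hst
      · -- Here `f` constrains from below, and its slope belongs to `G` unless it is vertical.
        rw [min_eq_left hst]
        by_cases hb0 : f.1 (0, 1) = 0
        · rw [hb0] at h0 ⊢; simpa using h0
        have hbp : 0 < f.1 (0, 1) := lt_of_le_of_ne hb (Ne.symm hb0)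
        have hp := h (slope f) (hG (Finset.mem_insert_of_mem (Finset.mem_image_of_mem _ hf)))
        have hz := (hF _).1 (htop (slope f)) f hf
        have e1 : ∀ y, slope f y = -(f.1 (0, 1))⁻¹ * f.1 (y, 0) := fun y => by
          simp [slope]
        have e2 : f.1 (top (slope f)) = f.1 ((top (slope f)).1, 0) +
            (top (slope f)).2 * f.1 (0, 1) := by
          rw [← smul_eq_mul, ← map_smul, ← map_add]
          simp
        simp only [c, e1] at hp
        rw [e2] at hz
        have e3 := mul_le_mul_of_nonneg_right hp hbp.le
        have e4 : ∀ u : ℝ, -(f.1 (0, 1))⁻¹ * u * f.1 (0, 1) = -u := fun u => by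
          field_simp
        rw [sub_mul, sub_mul, e4, e4] at e3
        linarith
      · rw [min_eq_right hst]; exact h0
    · have : t₀ * f.1 (0, 1) ≤ min s t₀ * f.1 (0, 1) :=
        mul_le_mul_of_nonpos_right (min_le_right _ _) hb.le
      linarith
  have hinj : Function.Injective (fun p : W →ₗ[ℝ] ℝ => p ∘ₗ LinearMap.fst ℝ W ℝ) := by
    intro p q h
    ext x
    simpa using LinearMap.congr_fun h (x, 0)
  rw [hφ.power (fun p : W →ₗ[ℝ] ℝ => p ∘ₗ LinearMap.fst ℝ W ℝ) c hinj G
    ⟨0, hG (Finset.mem_insert_self _ _)⟩ _ (hP.up N)]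
  refine Finset.sum_congr rfl fun p hp => ?_
  have hface : CB (lowFace p P) := by
    obtain ⟨T, _, hT⟩ := lowFace_hull p S hS
    rw [hT]; exact CB.hull T.finite_toSet
  obtain ⟨M, hM⟩ := hface.exists_bound p
  have hlow : ∀ x ∈ lowFace p P, (x, p x - c p) ∈ P := by
    rintro x ⟨t, ht, h⟩
    have h1 := h _ (htop p)
    have h2 := htop' p _ ht
    have : t = p x - c p := by simp only [c]; simp only at h2; linarith
    rwa [← this]
  have hwedge : up P N ∩ {x | ∀ j ∈ G, (j ∘ₗ LinearMap.fst ℝ W ℝ) x - c j ≤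
      (p ∘ₗ LinearMap.fst ℝ W ℝ) x - c p} =
      (fun y => ((0 : W), -c p) + y) '' wedge p (lowFace p P) (N + c p) := by
    ext z
    simp only [Set.mem_inter_iff, Set.mem_ofPred_eq, LinearMap.comp_apply, LinearMap.fst_apply,
      Set.mem_image]
    constructor
    · rintro ⟨⟨t, ht, htz, hzN⟩, h⟩
      obtain ⟨t', ht', htP⟩ := hkey z.1 (p z.1 - c p) t ht h
      refine ⟨(z.1, z.2 + c p), ⟨⟨t', htP, fun w hw => ?_⟩, ?_, ?_⟩, by ext <;> simp⟩
      · have := hc p w hw; linarith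
      · have := hc p _ ht; simp only at this ⊢; linarith
      · simpa using hzN
    · rintro ⟨⟨y, s⟩, ⟨h1, h2, h3⟩, rfl⟩
      simp only [Prod.mk_add_mk, zero_add] at *
      refine ⟨⟨p y - c p, ?_, ?_, ?_⟩, ?_⟩
      · simpa using hlow y h1
      · simp only; linarith
      · simp only; linarith
      · intro q hq
        exact hc q _ (hlow y h1)
  rw [hwedge, hφ.trans _ _ (hface.wedge p _), lam_indep hφ hcyl p hface]
  intro x hx
  have := hN _ (hlow x hx)
  simp only at this
  linarith

/-- Turning a wedge upside down gives its complement in a vertical cylinder, on which `φ`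
vanishes. -/
theorem lam_neg (hφ : SV φ) (hcyl : ∀ A a b, CB A → φ (A ×ˢ Set.Icc a b) = 0)
    (σ : (W × ℝ) ≃ₗ[ℝ] W × ℝ) (hσ : ∀ z, σ z = (z.1, -z.2))
    (p : W →ₗ[ℝ] ℝ) {C : Set W} (hC : CB C) :
    lam (fun A => φ (σ '' A)) p C = - lam φ (-p) C := by
  obtain ⟨N, hN⟩ := hC.exists_bound (-p)
  rw [← lam_indep hφ hcyl (-p) hC hN]
  set M := sSup (p '' C) with hM
  have hpM : ∀ x ∈ C, p x ≤ M := fun x hx =>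
    le_csSup (hC.2.image p.continuous_of_finiteDimensional).bddAbove (Set.mem_image_of_mem p hx)
  have hmem : ∀ z, z ∈ σ '' wedge p C M ↔ z.1 ∈ C ∧ -M ≤ z.2 ∧ z.2 ≤ -p z.1 := by
    intro z
    constructor
    · rintro ⟨y, ⟨h1, h2, h3⟩, rfl⟩
      rw [hσ]
      exact ⟨h1, neg_le_neg h3, neg_le_neg h2⟩
    · rintro ⟨h1, h2, h3⟩
      exact ⟨(z.1, -z.2), ⟨h1, le_neg_of_le_neg h3, neg_le.1 h2⟩, by rw [hσ]; simp⟩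
  have hu : σ '' wedge p C M ∪ wedge (-p) C N = C ×ˢ Set.Icc (-M) N := by
    ext z
    rw [Set.mem_union, hmem]
    simp only [wedge, Set.mem_ofPred_eq, Set.mem_prod, Set.mem_Icc, LinearMap.neg_apply]
    constructor
    · rintro (⟨h1, h2, h3⟩ | ⟨h1, h2, h3⟩)
      · exact ⟨h1, h2, h3.trans (hN _ h1)⟩
      · exact ⟨h1, (neg_le_neg (hpM _ h1)).trans h2, h3⟩
    · rintro ⟨h1, h2, h3⟩
      rcases le_total z.2 (-p z.1) with h | h
      · exact Or.inl ⟨h1, h2, h⟩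
      · exact Or.inr ⟨h1, h, h3⟩
  have hA : CB (σ '' wedge p C M) := (hC.wedge p M).image σ.toLinearMap
  have hv := hφ.val _ _ hA (hC.wedge (-p) N) (by rw [hu]; exact (hC.prod (CB.Icc _ _)).1)
  have hi : φ (σ '' wedge p C M ∩ wedge (-p) C N) = 0 := by
    refine hφ.simple _ (p ∘ₗ LinearMap.fst ℝ W ℝ + LinearMap.snd ℝ W ℝ) 0
      (hA.inter (hC.wedge (-p) N)) ?_ ?_
    · intro h
      simpa using LinearMap.congr_fun h (0, 1)
    · rintro z ⟨h1, h2⟩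
      have h3 := ((hmem z).1 h1).2.2
      have h4 : -p z.1 ≤ z.2 := h2.2.1
      simp only [LinearMap.add_apply, LinearMap.comp_apply, LinearMap.fst_apply,
        LinearMap.snd_apply]
      linarith
  rw [hu, hi, hcyl _ _ _ hC] at hv
  rw [add_zero] at hv
  exact eq_neg_of_add_eq_zero_left hv.symm

/-- A convex body is the intersection of the part above and the part below it in a vertical
cylinder. -/
theorem up_down (hφ : SV φ) (hcyl : ∀ A a b, CB A → φ (A ×ˢ Set.Icc a b) = 0)
    (σ : (W × ℝ) ≃ₗ[ℝ] W × ℝ) (hσ : ∀ z, σ z = (z.1, -z.2))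
    {P : Set (W × ℝ)} (hP : CB P) {N : ℝ} (hN : ∀ z ∈ P, z.2 ≤ N) (hN' : ∀ z ∈ P, -z.2 ≤ N) :
    φ P = φ (up P N) + φ (σ '' up (σ '' P) N) := by
  have hmem : ∀ z, z ∈ σ '' up (σ '' P) N ↔ ∃ t, (z.1, t) ∈ P ∧ z.2 ≤ t ∧ -N ≤ z.2 := by
    intro z
    constructor
    · rintro ⟨y, ⟨t, ⟨w, hw, hwt⟩, h2, h3⟩, rfl⟩
      rw [hσ] at hwt ⊢
      obtain ⟨h4, h5⟩ := Prod.mk.inj hwt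
      refine ⟨w.2, by rw [← h4]; exact hw, ?_, neg_le_neg h3⟩
      simp only; linarith
    · rintro ⟨t, h1, h2, h3⟩
      exact ⟨(z.1, -z.2), ⟨-t, ⟨_, h1, hσ _⟩, neg_le_neg h2, neg_le.1 h3⟩, by rw [hσ]; simp⟩
  have hu : up P N ∪ σ '' up (σ '' P) N = (LinearMap.fst ℝ W ℝ '' P) ×ˢ Set.Icc (-N) N := by
    ext z
    rw [Set.mem_union, hmem]
    simp only [up, Set.mem_ofPred_eq, Set.mem_prod, Set.mem_Icc]
    constructor
    · rintro (⟨t, h1, h2, h3⟩ | ⟨t, h1, h2, h3⟩)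
      · have := hN' _ h1
        exact ⟨⟨_, h1, rfl⟩, by simp only at this; linarith, h3⟩
      · exact ⟨⟨_, h1, rfl⟩, h3, h2.trans (hN _ h1)⟩
    · rintro ⟨⟨⟨x, t⟩, hw, hx⟩, h2, h3⟩
      simp only [LinearMap.fst_apply] at hx
      subst hx
      rcases le_total t z.2 with h | h
      · exact Or.inl ⟨t, hw, h, h3⟩
      · exact Or.inr ⟨t, hw, h, h2⟩
  have hi : up P N ∩ σ '' up (σ '' P) N = P := by
    ext z
    rw [Set.mem_inter_iff, hmem]
    simp only [up, Set.mem_ofPred_eq]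
    constructor
    · rintro ⟨⟨t, h1, h2, h3⟩, ⟨s, h4, h5, h6⟩⟩
      have hseg := hP.1.segment_subset h1 h4
      apply hseg
      rw [segment_eq_image_lineMap]
      have hz : z.2 ∈ segment ℝ t s := by
        rw [segment_eq_Icc (h2.trans h5)]; exact ⟨h2, h5⟩
      rw [segment_eq_image_lineMap] at hz
      obtain ⟨θ, hθ, hz⟩ := hz
      refine ⟨θ, hθ, ?_⟩
      ext
      · simp [AffineMap.lineMap_apply]
      · simp only [AffineMap.lineMap_apply] at hz ⊢
        simpa using hz
    · intro hz
      refine ⟨⟨z.2, hz, le_rfl, hN z hz⟩, z.2, hz, le_rfl, by have := hN' z hz; linarith⟩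
  have hσP : CB (σ '' P) := hP.image σ.toLinearMap
  have := hφ.val _ _ (hP.up N) ((hσP.up N).image σ.toLinearMap) (by
    rw [LinearEquiv.coe_coe, hu]
    exact ((hP.image (LinearMap.fst ℝ W ℝ)).prod (CB.Icc _ _)).1)
  rw [LinearEquiv.coe_coe, hu, hi, hcyl _ _ _ (hP.image (LinearMap.fst ℝ W ℝ)), zero_add] at this
  exact this

/-- If `φ` vanishes on vertical cylinders and all its wedge valuations are Minkowski additive, then
so is `φ`: the facets of `P + Q` are the sums of the corresponding faces of `P` and `Q`. -/
theorem polyAdd_step (hφ : SV φ) (hcyl : ∀ A a b, CB A → φ (A ×ˢ Set.Icc a b) = 0)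
    (hlam : ∀ p : W →ₗ[ℝ] ℝ, PolyAdd (lam φ p)) : PolyAdd φ := by
  classical
  let σ : (W × ℝ) ≃ₗ[ℝ] W × ℝ := (LinearEquiv.refl ℝ W).prodCongr (LinearEquiv.neg ℝ)
  have hσ : ∀ z, σ z = (z.1, -z.2) := fun z => rfl
  have hφσ : SV (fun A => φ (σ '' A)) := hφ.comp_equiv σ
  have hcylσ : ∀ A a b, CB A → φ (σ '' (A ×ˢ Set.Icc a b)) = 0 := by
    intro A a b hA
    have : σ '' (A ×ˢ Set.Icc a b) = A ×ˢ Set.Icc (-b) (-a) := by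
      ext z
      simp only [Set.mem_image, Set.mem_prod, Set.mem_Icc]
      constructor
      · rintro ⟨y, ⟨h1, h2, h3⟩, rfl⟩
        rw [hσ]
        exact ⟨h1, neg_le_neg h3, neg_le_neg h2⟩
      · rintro ⟨h1, h2, h3⟩
        exact ⟨(z.1, -z.2), ⟨h1, le_neg_of_le_neg h3, neg_le.1 h2⟩, by rw [hσ]; simp⟩
    rw [this]
    exact hcyl _ _ _ hA
  have hlamσ : ∀ p : W →ₗ[ℝ] ℝ, PolyAdd (lam (fun A => φ (σ '' A)) p) := by
    intro p S T hS hT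
    have h1 := CB.hull (W := W) S.finite_toSet
    have h2 := CB.hull (W := W) T.finite_toSet
    rw [lam_neg hφ hcyl σ hσ p h1, lam_neg hφ hcyl σ hσ p h2, lam_neg hφ hcyl σ hσ p (h1.add h2),
      hlam (-p) S T hS hT]
    ring
  -- Additivity of the upper parts, for any `ψ` satisfying the hypotheses.
  have hup : ∀ ψ : Set (W × ℝ) → ℂ, SV ψ → (∀ A a b, CB A → ψ (A ×ˢ Set.Icc a b) = 0) →
      (∀ p : W →ₗ[ℝ] ℝ, PolyAdd (lam ψ p)) → ∀ S T : Finset (W × ℝ), S.Nonempty → T.Nonempty →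
      ∀ N, (∀ z ∈ convexHull ℝ (S : Set (W × ℝ)), z.2 ≤ N) →
        (∀ z ∈ convexHull ℝ (T : Set (W × ℝ)), z.2 ≤ N) →
        (∀ z ∈ convexHull ℝ (S : Set (W × ℝ)) + convexHull ℝ (T : Set (W × ℝ)), z.2 ≤ N) →
        ψ (up (convexHull ℝ (S : Set (W × ℝ)) + convexHull ℝ (T : Set (W × ℝ))) N) =
          ψ (up (convexHull ℝ (S : Set (W × ℝ))) N) +
            ψ (up (convexHull ℝ (T : Set (W × ℝ))) N) := by
    intro ψ hψ hc hl S T hS hT N h1 h2 h3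
    have hST : convexHull ℝ (S : Set (W × ℝ)) + convexHull ℝ (T : Set (W × ℝ)) =
        convexHull ℝ ((S + T : Finset (W × ℝ)) : Set (W × ℝ)) := by
      rw [Finset.coe_add, convexHull_add]
    obtain ⟨G1, hG1⟩ := facet_sum hψ hc S hS
    obtain ⟨G2, hG2⟩ := facet_sum hψ hc T hT
    obtain ⟨G3, hG3⟩ := facet_sum hψ hc (S + T) (hS.add hT)
    rw [hG1 (G1 ∪ G2 ∪ G3) (fun x hx => by simp [hx]) N h1,
      hG2 (G1 ∪ G2 ∪ G3) (fun x hx => by simp [hx]) N h2, hST,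
      hG3 (G1 ∪ G2 ∪ G3) (fun x hx => by simp [hx]) N (by rwa [← hST]), ← hST,
      ← Finset.sum_add_distrib]
    refine Finset.sum_congr rfl fun p _ => ?_
    obtain ⟨S', hS', eS⟩ := lowFace_hull p S hS
    obtain ⟨T', hT', eT⟩ := lowFace_hull p T hT
    rw [lowFace_add, eS, eT]
    exact hl p S' T' hS' hT'
  intro S T hS hT
  set P := convexHull ℝ (S : Set (W × ℝ)) with hPd
  set Q := convexHull ℝ (T : Set (W × ℝ)) with hQd
  have hP : CB P := CB.hull S.finite_toSet
  have hQ : CB Q := CB.hull T.finite_toSet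
  obtain ⟨N, hN⟩ := ((hP.2.union hQ.2).union (hP.add hQ).2).exists_bound_of_continuousOn
    (f := fun z : W × ℝ => z.2) continuous_snd.continuousOn
  have b1 : ∀ z ∈ P, |z.2| ≤ N := fun z hz => hN z (Or.inl (Or.inl hz))
  have b2 : ∀ z ∈ Q, |z.2| ≤ N := fun z hz => hN z (Or.inl (Or.inr hz))
  have b3 : ∀ z ∈ P + Q, |z.2| ≤ N := fun z hz => hN z (Or.inr hz)
  rw [up_down hφ hcyl σ hσ hP (fun z hz => (abs_le'.1 (b1 z hz)).1)
      (fun z hz => (abs_le'.1 (b1 z hz)).2),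
    up_down hφ hcyl σ hσ hQ (fun z hz => (abs_le'.1 (b2 z hz)).1)
      (fun z hz => (abs_le'.1 (b2 z hz)).2),
    up_down hφ hcyl σ hσ (hP.add hQ) (fun z hz => (abs_le'.1 (b3 z hz)).1)
      (fun z hz => (abs_le'.1 (b3 z hz)).2),
    hup φ hφ hcyl hlam S T hS hT N (fun z hz => (abs_le'.1 (b1 z hz)).1)
      (fun z hz => (abs_le'.1 (b2 z hz)).1) (fun z hz => (abs_le'.1 (b3 z hz)).1)]
  have hσh : ∀ R : Finset (W × ℝ), σ '' convexHull ℝ (R : Set (W × ℝ)) =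
      convexHull ℝ ((R.image σ : Finset (W × ℝ)) : Set (W × ℝ)) := by
    intro R
    rw [Finset.coe_image]
    exact LinearMap.image_convexHull (𝕜 := ℝ) σ.toLinearMap _
  have hbσ : ∀ R : Set (W × ℝ), (∀ z ∈ R, |z.2| ≤ N) → ∀ z ∈ σ '' R, z.2 ≤ N := by
    rintro R hR _ ⟨z, hz, rfl⟩
    rw [hσ]
    exact (abs_le'.1 (hR z hz)).2
  have := hup _ hφσ hcylσ hlamσ (S.image σ) (T.image σ) (hS.image _) (hT.image _) N
    (by rw [← hσh]; exact hbσ _ b1) (by rw [← hσh]; exact hbσ _ b2)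
    (by rw [← hσh, ← hσh, ← Set.image_add]; exact hbσ _ b3)
  rw [← hσh, ← hσh, ← Set.image_add] at this
  rw [this]
  ring

end Step

/-! ### Vanishing on orthogonal sums implies Minkowski additivity -/

/-- `φ` vanishes on all sums `A + B` of compact convex sets lying in orthogonal nonzero subspaces
`E` and `F`, respectively, such that `E` contains the vector `p`. -/
def HV {W : Type*} [NormedAddCommGroup W] [InnerProductSpace ℝ W] (φ : Set W → ℂ) (p : W) : Prop :=
  ∀ E F : Submodule ℝ W, (∀ x ∈ E, ∀ y ∈ F, inner ℝ x y = 0) → p ∈ E → E ≠ ⊥ → F ≠ ⊥ →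
    ∀ A B : Set W, CB A → CB B → A ⊆ E → B ⊆ F → φ (A + B) = 0

theorem CB.eq_Icc {A : Set ℝ} (hA : CB A) (hne : A.Nonempty) :
    ∃ a b : ℝ, a ≤ b ∧ A = Set.Icc a b := by
  have h := eq_Icc_of_connected_compact ⟨hne, hA.1.isPreconnected⟩ hA.2
  refine ⟨_, _, ?_, h⟩
  rw [h] at hne
  exact Set.nonempty_Icc.1 hne

/-- On the line, a simple translation invariant valuation is additive in the length of intervals. -/
theorem polyAdd_real {φ : Set ℝ → ℂ} (hφ : SV φ) : PolyAdd φ := by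
  intro S T hS hT
  obtain ⟨a, b, hab, h1⟩ := (CB.hull S.finite_toSet).eq_Icc (Finset.coe_nonempty.2 hS).convexHull
  obtain ⟨c, d, hcd, h2⟩ := (CB.hull T.finite_toSet).eq_Icc (Finset.coe_nonempty.2 hT).convexHull
  rw [h1, h2, Set.Icc_add_Icc hab hcd,
    hφ.cut (CB.Icc _ _) (f := LinearMap.id) (by
      intro h; simpa using LinearMap.congr_fun h 1) (b + c)]
  have e1 : Set.Icc (a + c) (b + d) ∩ {x | LinearMap.id (R := ℝ) x ≤ b + c} =
      (fun y => c + y) '' Set.Icc a b := by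
    rw [Set.image_const_add_Icc]
    ext x
    simp only [Set.mem_inter_iff, Set.mem_Icc, Set.mem_ofPred_eq, LinearMap.id_apply]
    constructor
    · rintro ⟨⟨_, _⟩, _⟩; constructor <;> linarith
    · rintro ⟨_, _⟩; refine ⟨⟨?_, ?_⟩, ?_⟩ <;> linarith
  have e2 : Set.Icc (a + c) (b + d) ∩ {x | b + c ≤ LinearMap.id (R := ℝ) x} =
      (fun y => b + y) '' Set.Icc c d := by
    rw [Set.image_const_add_Icc]
    ext x
    simp only [Set.mem_inter_iff, Set.mem_Icc, Set.mem_ofPred_eq, LinearMap.id_apply]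
    constructor
    · rintro ⟨⟨_, _⟩, _⟩; constructor <;> linarith
    · rintro ⟨_, _⟩; refine ⟨⟨?_, ?_⟩, ?_⟩ <;> linarith
  rw [e1, e2, hφ.trans _ _ (CB.Icc _ _), hφ.trans _ _ (CB.Icc _ _)]

/-- The vanishing of `φ` on orthogonal sums passes to the wedge valuations, with the gradient of
the slope taking the role of the distinguished vector. -/
theorem HV.lam {W : Type*} [NormedAddCommGroup W] [InnerProductSpace ℝ W] [FiniteDimensional ℝ W]
    {φ : Set W → ℂ} {p e : W} (hp : p ∈ (ℝ ∙ e)) (he : e ≠ 0)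
    (j : ((ℝ ∙ e)ᗮ × ℝ) ≃ₗ[ℝ] W) (hj : ∀ z, j z = z.1 + z.2 • e)
    (hφ : SV φ) (hHV : HV φ p)
    (hcyl : ∀ (A : Set (ℝ ∙ e)ᗮ) a b, CB A → φ (j '' (A ×ˢ Set.Icc a b)) = 0)
    (q : (ℝ ∙ e)ᗮ →ₗ[ℝ] ℝ) :
    ∃ v, HV (lam (fun A => φ (j '' A)) q) v := by
  have hSV := hφ.comp_equiv j
  refine ⟨(InnerProductSpace.toDual ℝ (ℝ ∙ e)ᗮ).symm (LinearMap.toContinuousLinearMap q), ?_⟩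
  intro E F hEF hv hE hF A B hA hB hAE hBF
  have hq : ∀ y ∈ B, q y = 0 := by
    intro y hy
    have := hEF _ hv y (hBF hy)
    rwa [InnerProductSpace.toDual_symm_apply] at this
  obtain ⟨N, hN⟩ := hA.exists_bound q
  rw [← lam_indep hSV hcyl q (hA.add hB) (N := N)]
  swap
  · rintro _ ⟨x, hx, y, hy, rfl⟩
    simp only [map_add, hq y hy, add_zero]
    exact hN x hx
  have key : j '' wedge q (A + B) N = j '' wedge q A N + (ℝ ∙ e)ᗮ.subtype '' B := by
    ext w
    simp only [Set.mem_add, Set.mem_image]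
    constructor
    · rintro ⟨⟨_, s⟩, ⟨⟨x, hx, y, hy, rfl⟩, h2, h3⟩, rfl⟩
      simp only [map_add, hq y hy, add_zero] at h2
      refine ⟨_, ⟨(x, s), ⟨hx, h2, h3⟩, rfl⟩, _, ⟨y, hy, rfl⟩, ?_⟩
      simp only [hj, Submodule.subtype_apply, Submodule.coe_add]
      abel
    · rintro ⟨_, ⟨⟨x, s⟩, ⟨hx, h2, h3⟩, rfl⟩, _, ⟨y, hy, rfl⟩, rfl⟩
      refine ⟨(x + y, s), ⟨⟨x, hx, y, hy, rfl⟩, ?_, h3⟩, ?_⟩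
      · simpa only [map_add, hq y hy, add_zero] using h2
      · simp only [hj, Submodule.subtype_apply, Submodule.coe_add]
        abel
  rw [key]
  refine hHV ((ℝ ∙ e) ⊔ E.map (ℝ ∙ e)ᗮ.subtype) (F.map (ℝ ∙ e)ᗮ.subtype) ?_
    (Submodule.mem_sup_left hp) ?_ ?_ _ _ ((hA.wedge q N).image j.toLinearMap)
    (hB.image _) ?_ ?_
  · intro x hx y hy
    obtain ⟨a, ha, b, hb, rfl⟩ := Submodule.mem_sup.1 hx
    obtain ⟨b, hb, rfl⟩ := hb
    obtain ⟨y, hy, rfl⟩ := hy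
    have h1 : inner ℝ b y = 0 := hEF b hb y hy
    have h2 : inner ℝ a ((ℝ ∙ e)ᗮ.subtype y) = 0 := Submodule.inner_right_of_mem_orthogonal ha y.2
    rw [inner_add_left, h2, zero_add]
    exact h1
  · intro h
    have : e ∈ (ℝ ∙ e) ⊔ E.map (ℝ ∙ e)ᗮ.subtype :=
      Submodule.mem_sup_left (Submodule.mem_span_singleton_self e)
    rw [h] at this
    exact he (by simpa using this)
  · intro h
    exact hF (Submodule.map_injective_of_injective (ℝ ∙ e)ᗮ.injective_subtype
      (h.trans (Submodule.map_bot _).symm))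
  · rintro _ ⟨⟨x, s⟩, ⟨hx, _⟩, rfl⟩
    rw [hj, add_comm]
    exact Submodule.add_mem_sup (Submodule.smul_mem _ _ (Submodule.mem_span_singleton_self e))
      ⟨x, hAE hx, rfl⟩
  · rintro _ ⟨y, hy, rfl⟩
    exact ⟨y, hBF hy, rfl⟩

/-- A simple translation invariant valuation vanishing on orthogonal sums is Minkowski additive on
polytopes. -/
theorem polyAdd_of_HV (d : ℕ) : ∀ (W : Type u) [NormedAddCommGroup W] [InnerProductSpace ℝ W]
    [FiniteDimensional ℝ W], Module.finrank ℝ W = d + 1 → ∀ (φ : Set W → ℂ) (p : W),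
    SV φ → HV φ p → PolyAdd φ := by
  induction d with
  | zero =>
    intro W _ _ _ hd φ p hφ _
    have e : ℝ ≃ₗ[ℝ] W := LinearEquiv.ofFinrankEq ℝ W (by simp [hd])
    exact PolyAdd.of_comp_equiv e (polyAdd_real (hφ.comp_equiv e))
  | succ d ih =>
    intro W _ _ _ hd φ p hφ hHV
    have : Nontrivial W := Module.nontrivial_of_finrank_pos (R := ℝ) (by omega)
    obtain ⟨e, he, hp⟩ : ∃ e : W, e ≠ 0 ∧ p ∈ (ℝ ∙ e) := by
      by_cases hp : p = 0
      · obtain ⟨e, he⟩ := exists_ne (0 : W)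
        exact ⟨e, he, by rw [hp]; exact Submodule.zero_mem _⟩
      · exact ⟨p, hp, Submodule.mem_span_singleton_self p⟩
    have hfr : Module.finrank ℝ (ℝ ∙ e)ᗮ = d + 1 := by
      have : Fact (Module.finrank ℝ W = (d + 1) + 1) := ⟨hd⟩
      exact Submodule.finrank_orthogonal_span_singleton he
    obtain ⟨j, hj⟩ : ∃ j : ((ℝ ∙ e)ᗮ × ℝ) ≃ₗ[ℝ] W, ∀ z, j z = z.1 + z.2 • e := by
      let f : ((ℝ ∙ e)ᗮ × ℝ) →ₗ[ℝ] W :=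
        (ℝ ∙ e)ᗮ.subtype.coprod (LinearMap.toSpanSingleton ℝ W e)
      have hf : ∀ z, f z = z.1 + z.2 • e := fun z => by simp [f]
      have hinj : Function.Injective f := by
        rw [← LinearMap.ker_eq_bot, LinearMap.ker_eq_bot']
        rintro ⟨y, s⟩ h
        rw [hf] at h
        have h1 : inner ℝ e (y : W) = 0 :=
          Submodule.inner_right_of_mem_orthogonal (Submodule.mem_span_singleton_self e) y.2
        have h2 : inner ℝ e ((y : W) + s • e) = 0 := by simp only at h; rw [h, inner_zero_right]
        rw [inner_add_right, h1, zero_add, inner_smul_right] at h2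
        have hs : s = 0 := (mul_eq_zero.1 h2).resolve_right (by simpa using he)
        subst hs
        have : (y : W) = 0 := by simpa using h
        ext <;> simp [this]
      exact ⟨LinearMap.linearEquivOfInjective f hinj (by simp [hfr, hd]), hf⟩
    have hcyl : ∀ (A : Set (ℝ ∙ e)ᗮ) a b, CB A → φ (j '' (A ×ˢ Set.Icc a b)) = 0 := by
      intro A a b hA
      have key : j '' (A ×ˢ Set.Icc a b) =
          LinearMap.toSpanSingleton ℝ W e '' Set.Icc a b + (ℝ ∙ e)ᗮ.subtype '' A := by
        ext w
        simp only [Set.mem_add, Set.mem_image]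
        constructor
        · rintro ⟨⟨y, s⟩, ⟨hy, hs⟩, rfl⟩
          exact ⟨_, ⟨s, hs, rfl⟩, _, ⟨y, hy, rfl⟩, by simp [hj, add_comm]⟩
        · rintro ⟨_, ⟨s, hs, rfl⟩, _, ⟨y, hy, rfl⟩, rfl⟩
          exact ⟨(y, s), ⟨hy, hs⟩, by simp [hj, add_comm]⟩
      rw [key]
      refine hHV (ℝ ∙ e) (ℝ ∙ e)ᗮ
        (fun x hx y hy => Submodule.inner_right_of_mem_orthogonal hx hy) hp ?_ ?_ _ _
        ((CB.Icc a b).image _) (hA.image _) ?_ ?_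
      · simpa using he
      · intro h
        rw [h] at hfr
        simp at hfr
      · rintro _ ⟨s, _, rfl⟩
        exact Submodule.smul_mem _ _ (Submodule.mem_span_singleton_self e)
      · rintro _ ⟨y, _, rfl⟩
        exact y.2
    refine PolyAdd.of_comp_equiv j (polyAdd_step (hφ.comp_equiv j) hcyl fun q => ?_)
    obtain ⟨v, hv⟩ := HV.lam hp he j hj hφ hHV hcyl q
    exact ih _ hfr _ v ((hφ.comp_equiv j).lam hcyl q) hv

/-! ### Reflections, rotation invariance and continuity -/

section Defs
variable {W : Type*} [NormedAddCommGroup W] [InnerProductSpace ℝ W]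

/-- The reflection in the hyperplane orthogonal to `u`; it is the identity if `u = 0`. -/
noncomputable def refl (u : W) : W →ₗ[ℝ] W :=
  LinearMap.id - (2 / inner ℝ u u : ℝ) • (innerₛₗ ℝ u).smulRight u

theorem refl_apply (u x : W) : refl u x = x - (2 / inner ℝ u u * inner ℝ u x) • u := by
  simp [refl, smul_smul]

theorem inner_refl_refl (u x y : W) : inner ℝ (refl u x) (refl u y) = inner ℝ x y := by
  rcases eq_or_ne u 0 with rfl | hu
  · simp [refl_apply]
  have hu' : inner ℝ u u ≠ (0 : ℝ) := by simpa using hu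
  simp only [refl_apply, inner_sub_left, inner_sub_right, inner_smul_left, inner_smul_right,
    real_inner_comm u x, conj_trivial]
  field_simp
  ring

theorem norm_refl (u x : W) : ‖refl u x‖ = ‖x‖ := by
  rw [norm_eq_sqrt_real_inner, inner_refl_refl, ← norm_eq_sqrt_real_inner]

theorem refl_refl (u x : W) : refl u (refl u x) = x := by
  rcases eq_or_ne u 0 with rfl | hu
  · simp [refl_apply]
  have hu' : inner ℝ u u ≠ (0 : ℝ) := by simpa using hu
  simp only [refl_apply, inner_sub_right, inner_smul_right]
  rw [sub_sub, ← add_smul]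
  have : (2 / inner ℝ u u * inner ℝ u x +
      2 / inner ℝ u u * (inner ℝ u x - 2 / inner ℝ u u * inner ℝ u x * inner ℝ u u) : ℝ) = 0 := by
    field_simp
    ring
  rw [this, zero_smul, sub_zero]

theorem refl_of_orthogonal {u x : W} (h : inner ℝ u x = 0) : refl u x = x := by
  simp [refl_apply, h]

theorem refl_self {u : W} : refl u u = -u := by
  rcases eq_or_ne u 0 with rfl | hu
  · simp [refl_apply]
  have hu' : inner ℝ u u ≠ (0 : ℝ) := by simpa using hu
  rw [refl_apply, div_mul_cancel₀ _ hu', two_smul]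
  abel

/-- The reflection exchanging two vectors of equal length. -/
theorem refl_sub {x y : W} (h : ‖x‖ = ‖y‖) : refl (x - y) x = y := by
  rcases eq_or_ne x y with rfl | hne
  · simp [refl_apply]
  have hu : x - y ≠ 0 := sub_ne_zero.2 hne
  have hu' : inner ℝ (x - y) (x - y) ≠ (0 : ℝ) := by simpa using hu
  have h2 : (inner ℝ (x - y) (x - y) : ℝ) = 2 * inner ℝ (x - y) x := by
    have hx : (inner ℝ x x : ℝ) = inner ℝ y y := by
      rw [real_inner_self_eq_norm_sq, real_inner_self_eq_norm_sq, h]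
    simp only [inner_sub_left, inner_sub_right, real_inner_comm x y]
    linarith
  rw [refl_apply]
  have : (2 / inner ℝ (x - y) (x - y) * inner ℝ (x - y) x : ℝ) = 1 := by
    rw [div_mul_eq_mul_div, ← h2, div_self hu']
  rw [this, one_smul]
  abel

/-- Invariance under products of two hyperplane reflections; these generate the rotation group. -/
def RotInv (φ : Set W → ℂ) : Prop :=
  ∀ u v : W, u ≠ 0 → v ≠ 0 → ∀ A, CB A → φ (Set.image (refl u) (Set.image (refl v) A)) = φ A

/-- The Hausdorff distance of `K` and `L` is at most `δ`. -/
def Near (δ : ℝ) (K L : Set W) : Prop :=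
  (∀ x ∈ K, ∃ y ∈ L, dist x y ≤ δ) ∧ ∀ y ∈ L, ∃ x ∈ K, dist x y ≤ δ

/-- Continuity with respect to the Hausdorff distance on nonempty compact convex sets. -/
def HCont (φ : Set W → ℂ) : Prop :=
  ∀ K, CB K → K.Nonempty → ∀ ε > 0, ∃ δ > 0, ∀ L, CB L → L.Nonempty → Near δ K L →
    ‖φ L - φ K‖ ≤ ε

theorem Near.mono {δ δ' : ℝ} {K L : Set W} (h : Near δ K L) (hδ : δ ≤ δ') : Near δ' K L :=
  ⟨fun x hx => (h.1 x hx).imp fun _ hy => ⟨hy.1, hy.2.trans hδ⟩,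
    fun x hx => (h.2 x hx).imp fun _ hy => ⟨hy.1, hy.2.trans hδ⟩⟩

theorem Near.add {δ δ' : ℝ} {K L K' L' : Set W} (h : Near δ K L) (h' : Near δ' K' L') :
    Near (δ + δ') (K + K') (L + L') := by
  constructor
  · rintro _ ⟨x, hx, x', hx', rfl⟩
    obtain ⟨y, hy, h1⟩ := h.1 x hx
    obtain ⟨y', hy', h2⟩ := h'.1 x' hx'
    exact ⟨_, ⟨y, hy, y', hy', rfl⟩, (dist_add_add_le _ _ _ _).trans (add_le_add h1 h2)⟩
  · rintro _ ⟨x, hx, x', hx', rfl⟩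
    obtain ⟨y, hy, h1⟩ := h.2 x hx
    obtain ⟨y', hy', h2⟩ := h'.2 x' hx'
    exact ⟨_, ⟨y, hy, y', hy', rfl⟩, (dist_add_add_le _ _ _ _).trans (add_le_add h1 h2)⟩

theorem Near.rfl' {K : Set W} : Near 0 K K :=
  ⟨fun x hx => ⟨x, hx, by simp⟩, fun x hx => ⟨x, hx, by simp⟩⟩

/-- Simple, translation and rotation invariant continuous valuations. -/
structure ZV (φ : Set W → ℂ) : Prop where
  sv : SV φ
  rot : RotInv φ
  cont : HCont φ

/-- `φ` vanishes on all unit cubes. -/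
def Cubes (φ : Set W → ℂ) : Prop :=
  ∀ (ι : Type) [Fintype ι] (v : ι → W), Orthonormal ℝ v → Fintype.card ι = Module.finrank ℝ W →
    φ (parallelepiped v) = 0

theorem CB.parallelepiped {ι : Type*} [Fintype ι] (v : ι → W) : CB (parallelepiped v) := by
  have := parallelepiped_eq_convexHull v
  rw [this]
  refine CB.hull ?_
  have h : (∑ i, ({(0 : W), v i} : Set W)).Finite := by
    classical
    induction (Finset.univ : Finset ι) using Finset.induction_on with
    | empty => simp
    | insert a s ha ih =>
      rw [Finset.sum_insert ha]
      exact (Set.toFinite _).add ih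
  exact h

variable [FiniteDimensional ℝ W]

/-- Fixing a summand `B` orthogonal to the subspace `E` turns `φ` into a valuation of the same kind
on `E`. -/
theorem ZV.restrict {φ : Set W → ℂ} (hφ : ZV φ) (E : Submodule ℝ W) {B : Set W} (hB : CB B)
    (hBne : B.Nonempty) (hEB : ∀ x ∈ E, ∀ y ∈ B, inner ℝ x y = 0) :
    ZV (fun A : Set E => φ (E.subtype '' A + B)) where
  sv :=
    { empty := by simp [hφ.sv.empty]
      val := by
        intro A A' hA hA' hAA
        have e2 : E.subtype '' (A ∩ A') + B = (E.subtype '' A + B) ∩ (E.subtype '' A' + B) := by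
          ext w
          constructor
          · rintro ⟨_, ⟨x, ⟨hx, hx'⟩, rfl⟩, y, hy, rfl⟩
            exact ⟨⟨_, ⟨x, hx, rfl⟩, y, hy, rfl⟩, ⟨_, ⟨x, hx', rfl⟩, y, hy, rfl⟩⟩
          · rintro ⟨⟨_, ⟨x, hx, rfl⟩, y, hy, rfl⟩, ⟨_, ⟨x', hx', rfl⟩, y', hy', h⟩⟩
            have hxx : x = x' := by
              have h0 : (x' : W) - x = y - y' := by
                simp only [Submodule.subtype_apply] at h
                rw [sub_eq_sub_iff_add_eq_add, h, add_comm]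
              have h1 : inner ℝ ((x' : W) - x) ((x' : W) - x) = (0 : ℝ) := by
                nth_rw 2 [h0]
                rw [inner_sub_right, hEB _ (E.sub_mem x'.2 x.2) y hy,
                  hEB _ (E.sub_mem x'.2 x.2) y' hy', sub_zero]
              exact Subtype.ext (sub_eq_zero.1 (inner_self_eq_zero.1 h1)).symm
            subst hxx
            exact ⟨_, ⟨x, ⟨hx, hx'⟩, rfl⟩, y, hy, rfl⟩
        have h := hφ.sv.val _ _ ((hA.image E.subtype).add hB) ((hA'.image E.subtype).add hB)
          (by rw [← Set.union_add, ← Set.image_union]; exact (hAA.linear_image _).add hB.1)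
        rwa [← Set.union_add, ← Set.image_union, ← e2] at h
      trans := by
        intro A x hA
        rw [← hφ.sv.trans _ (x : W) ((hA.image E.subtype).add hB)]
        congr 1
        ext w
        constructor
        · rintro ⟨_, ⟨_, ⟨a, ha, rfl⟩, rfl⟩, y, hy, rfl⟩
          exact ⟨_, ⟨_, ⟨a, ha, rfl⟩, y, hy, rfl⟩, by simp [add_assoc]⟩
        · rintro ⟨_, ⟨_, ⟨a, ha, rfl⟩, y, hy, rfl⟩, rfl⟩
          exact ⟨_, ⟨_, ⟨a, ha, rfl⟩, rfl⟩, y, hy, by simp [add_assoc]⟩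
      simple := by
        intro A f a hA hf h
        refine hφ.sv.simple _ (f ∘ₗ (E.orthogonalProjectionOnto : W →ₗ[ℝ] E)) a
          ((hA.image E.subtype).add hB) ?_ ?_
        · intro h0
          apply hf
          ext x
          simpa using LinearMap.congr_fun h0 (x : W)
        · rintro _ ⟨_, ⟨x, hx, rfl⟩, y, hy, rfl⟩
          have : E.orthogonalProjectionOnto y = 0 :=
            Submodule.orthogonalProjectionOnto_eq_zero_iff.2 fun u hu => hEB u hu y hy
          simpa [this] using h x hx }
  rot := by
    intro u v hu hv A hA
    have hcoe : ∀ (u : E) (x : E), ((refl u x : E) : W) = refl (u : W) (x : W) := by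
      intro u x
      simp [refl_apply]
    have himg : ∀ (u : E) (A : Set E), E.subtype '' (refl u '' A) + B =
        refl (u : W) '' (E.subtype '' A + B) := by
      intro u A
      ext w
      constructor
      · rintro ⟨_, ⟨_, ⟨a, ha, rfl⟩, rfl⟩, y, hy, rfl⟩
        exact ⟨_, ⟨_, ⟨a, ha, rfl⟩, y, hy, rfl⟩, by
          simp [hcoe, refl_of_orthogonal (hEB u u.2 y hy)]⟩
      · rintro ⟨_, ⟨_, ⟨a, ha, rfl⟩, y, hy, rfl⟩, rfl⟩
        exact ⟨_, ⟨_, ⟨a, ha, rfl⟩, rfl⟩, y, hy, by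
          simp [hcoe, refl_of_orthogonal (hEB u u.2 y hy)]⟩
    beta_reduce
    rw [himg, himg]
    exact hφ.rot u v (by simpa using hu) (by simpa using hv) _ ((hA.image E.subtype).add hB)
  cont := by
    intro K hK hKne ε hε
    obtain ⟨δ, hδ, h⟩ := hφ.cont _ ((hK.image E.subtype).add hB) ((hKne.image _).add hBne) ε hε
    refine ⟨δ, hδ, fun L hL hLne hKL => h _ ((hL.image E.subtype).add hB)
      ((hLne.image _).add hBne) ?_⟩
    rw [← add_zero δ]
    refine Near.add ⟨?_, ?_⟩ Near.rfl'
    · rintro _ ⟨x, hx, rfl⟩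
      obtain ⟨y, hy, h⟩ := hKL.1 x hx
      exact ⟨_, ⟨y, hy, rfl⟩, h⟩
    · rintro _ ⟨x, hx, rfl⟩
      obtain ⟨y, hy, h⟩ := hKL.2 x hx
      exact ⟨_, ⟨y, hy, rfl⟩, h⟩

theorem CB.exists_polytope {K : Set W} (hK : CB K) (hne : K.Nonempty) {δ : ℝ} (hδ : 0 < δ) :
    ∃ S : Finset W, S.Nonempty ∧ Near δ K (convexHull ℝ (S : Set W)) := by
  obtain ⟨t, htK, htf, hcov⟩ := hK.2.finite_cover_balls hδ
  have hnear : ∀ x ∈ K, ∃ y ∈ t, dist x y ≤ δ := by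
    intro x hx
    obtain ⟨y, hy, hxy⟩ := Set.mem_iUnion₂.1 (hcov hx)
    exact ⟨y, hy, (mem_ball.1 hxy).le⟩
  refine ⟨htf.toFinset, ?_, ?_, ?_⟩
  · obtain ⟨x, hx⟩ := hne
    obtain ⟨y, hy, _⟩ := hnear x hx
    exact ⟨y, htf.mem_toFinset.2 hy⟩
  · intro x hx
    obtain ⟨y, hy, h⟩ := hnear x hx
    exact ⟨y, subset_convexHull ℝ _ (by simpa using hy), h⟩
  · intro y hy
    refine ⟨y, convexHull_min ?_ hK.1 hy, by simpa using hδ.le⟩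
    simpa using htK

/-- Minkowski additivity on all nonempty compact convex sets. -/
def MinkAdd (φ : Set W → ℂ) : Prop :=
  ∀ K L, CB K → CB L → K.Nonempty → L.Nonempty → φ (K + L) = φ K + φ L

/-- Polytopes are dense, so Minkowski additivity extends from them by continuity. -/
theorem PolyAdd.minkAdd {φ : Set W → ℂ} (h : PolyAdd φ) (hc : HCont φ) : MinkAdd φ := by
  intro K L hK hL hKne hLne
  rw [← sub_eq_zero, ← norm_le_zero_iff]
  refine le_of_forall_pos_le_add fun ε hε => ?_
  obtain ⟨δ₁, h₁, c₁⟩ := hc K hK hKne (ε / 3) (by positivity)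
  obtain ⟨δ₂, h₂, c₂⟩ := hc L hL hLne (ε / 3) (by positivity)
  obtain ⟨δ₃, h₃, c₃⟩ := hc (K + L) (hK.add hL) (hKne.add hLne) (ε / 3) (by positivity)
  set δ := min (min δ₁ δ₂) (δ₃ / 2) with hδ
  have hδ0 : 0 < δ := by positivity
  have l1 : δ ≤ δ₁ := (min_le_left _ _).trans (min_le_left _ _)
  have l2 : δ ≤ δ₂ := (min_le_left _ _).trans (min_le_right _ _)
  have l3 : δ + δ ≤ δ₃ := by have : δ ≤ δ₃ / 2 := min_le_right _ _; linarith
  obtain ⟨S, hS, nS⟩ := hK.exists_polytope hKne hδ0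
  obtain ⟨T, hT, nT⟩ := hL.exists_polytope hLne hδ0
  have hS' := CB.hull (W := W) S.finite_toSet
  have hT' := CB.hull (W := W) T.finite_toSet
  have hSn : (convexHull ℝ (S : Set W)).Nonempty := (Finset.coe_nonempty.2 hS).convexHull
  have hTn : (convexHull ℝ (T : Set W)).Nonempty := (Finset.coe_nonempty.2 hT).convexHull
  have e1 := c₁ _ hS' hSn (nS.mono l1)
  have e2 := c₂ _ hT' hTn (nT.mono l2)
  have e3 := c₃ _ (hS'.add hT') (hSn.add hTn) ((nS.add nT).mono l3)
  rw [h S T hS hT] at e3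
  set a := φ (convexHull ℝ (S : Set W))
  set b := φ (convexHull ℝ (T : Set W))
  have : φ (K + L) - (φ K + φ L) = (a - φ K) + (b - φ L) - (a + b - φ (K + L)) := by ring
  rw [this]
  refine (norm_sub_le _ _).trans ?_
  refine (add_le_add (norm_add_le _ _) le_rfl).trans ?_
  linarith

end Defs

/-! ### Homogeneity and rotation means -/

section Homog
variable {W : Type*} [NormedAddCommGroup W] [InnerProductSpace ℝ W] [FiniteDimensional ℝ W]

theorem near_smul {K : Set W} {R : ℝ} (hR : ∀ x ∈ K, ‖x‖ ≤ R) (s t : ℝ) :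
    Near (|s - t| * R) (s • K) (t • K) := by
  have key : ∀ x ∈ K, dist (s • x) (t • x) ≤ |s - t| * R := by
    intro x hx
    rw [dist_eq_norm, ← sub_smul, norm_smul, Real.norm_eq_abs]
    exact mul_le_mul_of_nonneg_left (hR x hx) (abs_nonneg _)
  constructor
  · rintro _ ⟨x, hx, rfl⟩
    exact ⟨_, ⟨x, hx, rfl⟩, key x hx⟩
  · rintro _ ⟨x, hx, rfl⟩
    exact ⟨_, ⟨x, hx, rfl⟩, key x hx⟩

theorem HCont.continuous_smul {φ : Set W → ℂ} (hc : HCont φ) {K : Set W} (hK : CB K)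
    (hne : K.Nonempty) : Continuous fun t : ℝ => φ (t • K) := by
  obtain ⟨R, hR⟩ := hK.2.isBounded.exists_norm_le
  have hR0 : 0 ≤ R := by
    obtain ⟨x, hx⟩ := hne
    exact (norm_nonneg x).trans (hR x hx)
  rw [Metric.continuous_iff]
  intro s ε hε
  obtain ⟨δ, hδ, h⟩ := hc (s • K) (hK.smul s) hne.smul_set (ε / 2) (by positivity)
  refine ⟨δ / (R + 1), by positivity, fun t ht => ?_⟩
  rw [dist_eq_norm]
  refine (h (t • K) (hK.smul t) hne.smul_set ((near_smul hR s t).mono ?_)).trans_lt (by linarith)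
  rw [dist_comm, Real.dist_eq] at ht
  calc |s - t| * R ≤ δ / (R + 1) * (R + 1) := by
        apply mul_le_mul ht.le (by linarith) hR0 (by positivity)
    _ = δ := by field_simp

/-- A Minkowski additive continuous functional is homogeneous of degree one: the defect
`t ↦ φ (t K) - t φ K` is additive, vanishes at `1` and is bounded on `[0, 1]`. -/
theorem MinkAdd.homog {φ : Set W → ℂ} (ha : MinkAdd φ) (hc : HCont φ) {K : Set W} (hK : CB K)
    (hne : K.Nonempty) {t : ℝ} (ht : 0 ≤ t) : φ (t • K) = t * φ K := by
  let h : ℝ → ℂ := fun t => φ (t • K) - t * φ K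
  have hadd : ∀ s t : ℝ, 0 ≤ s → 0 ≤ t → h (s + t) = h s + h t := by
    intro s t hs ht
    simp only [h]
    rw [hK.1.add_smul hs ht, ha _ _ (hK.smul s) (hK.smul t) hne.smul_set hne.smul_set]
    push_cast
    ring
  have h1 : h 1 = 0 := by simp [h]
  have h0 : h 0 = 0 := by
    have := hadd 0 0 le_rfl le_rfl
    simpa using this
  have hnat : ∀ (m : ℕ) (t : ℝ), 0 ≤ t → h (m * t) = m * h t := by
    intro m t ht
    induction m with
    | zero => simp [h0]
    | succ m ih =>
      push_cast
      rw [add_mul, one_mul, hadd _ _ (by positivity) ht, ih]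
      ring
  have hcont : Continuous h := by
    exact (hc.continuous_smul hK hne).sub (by fun_prop)
  obtain ⟨C, hC⟩ := (isCompact_Icc (a := (0 : ℝ)) (b := 1)).exists_bound_of_continuousOn
    hcont.continuousOn
  have hbd : ∀ s, 0 ≤ s → ‖h s‖ ≤ C := by
    intro s hs
    have e : h s = h (⌊s⌋₊ * 1 + (s - ⌊s⌋₊)) := by congr 1; ring
    have hfl := Nat.floor_le hs
    have hlt := Nat.lt_floor_add_one s
    rw [e, hadd _ _ (by positivity) (by linarith), hnat _ _ zero_le_one, h1, mul_zero, zero_add]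
    exact hC _ ⟨by linarith, by linarith⟩
  have : h t = 0 := by
    by_contra hne
    have hpos : 0 < ‖h t‖ := norm_pos_iff.2 hne
    obtain ⟨m, hm⟩ := exists_nat_gt (C / ‖h t‖)
    have := hbd (m * t) (by positivity)
    rw [hnat m t ht, norm_mul, Complex.norm_natCast] at this
    rw [div_lt_iff₀ hpos] at hm
    linarith
  exact sub_eq_zero.1 this

theorem MinkAdd.sum {φ : Set W → ℂ} (ha : MinkAdd φ) {ι : Type*} (T : Finset ι)
    (f : ι → Set W) (hf : ∀ i ∈ T, CB (f i) ∧ (f i).Nonempty) :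
    (CB (∑ i ∈ T, f i) ∧ (∑ i ∈ T, f i).Nonempty) ∧ φ (∑ i ∈ T, f i) = ∑ i ∈ T, φ (f i) := by
  classical
  induction T using Finset.induction_on with
  | empty =>
    have h := ha {0} {0} (CB.singleton 0) (CB.singleton 0) (by simp) (by simp)
    simp only [Set.singleton_add_singleton, add_zero, left_eq_add] at h
    simp only [Finset.sum_empty]
    exact ⟨⟨CB.singleton 0, Set.singleton_nonempty 0⟩, h⟩
  | insert a s has ih =>
    have h1 := hf a (Finset.mem_insert_self _ _)
    obtain ⟨⟨h2, h3⟩, h4⟩ := ih fun i hi => hf i (Finset.mem_insert_of_mem hi)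
    rw [Finset.sum_insert has, Finset.sum_insert has, ha _ _ h1.1 h2 h1.2 h3, h4]
    exact ⟨⟨h1.1.add h2, h1.2.add h3⟩, rfl⟩

/-- In dimension at least two, products of two reflections act transitively on spheres. -/
theorem exists_refl_refl (hd : 2 ≤ Module.finrank ℝ W) {x y : W} (h : ‖x‖ = ‖y‖) :
    ∃ u v : W, u ≠ 0 ∧ v ≠ 0 ∧ refl u (refl v x) = y := by
  rcases eq_or_ne x y with rfl | hne
  · have : Nontrivial W := Module.nontrivial_of_finrank_pos (R := ℝ) (by omega)
    obtain ⟨e, he⟩ := exists_ne (0 : W)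
    exact ⟨e, e, he, he, refl_refl e x⟩
  · have hy : y ≠ 0 := by
      rintro rfl
      rw [norm_zero, norm_eq_zero] at h
      exact hne h
    have hlt : Module.finrank ℝ (ℝ ∙ y) < Module.finrank ℝ W := by
      rw [finrank_span_singleton hy]
      omega
    have hbot : (ℝ ∙ y)ᗮ ≠ ⊥ := by
      intro hb
      rw [Submodule.orthogonal_eq_bot_iff] at hb
      rw [hb, finrank_top] at hlt
      exact lt_irrefl _ hlt
    obtain ⟨u, hu, hu0⟩ := Submodule.exists_mem_ne_zero_of_ne_bot hbot
    refine ⟨u, x - y, hu0, sub_ne_zero.2 hne, ?_⟩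
    rw [refl_sub h]
    exact refl_of_orthogonal
      (Submodule.inner_left_of_mem_orthogonal (Submodule.mem_span_singleton_self y) hu)

/-- A convex body in the ball of radius `M` whose support function is at least `M - δ` everywhere
is `δ`-close to that ball. -/
theorem near_ball {L : Set W} (hL : CB L) (hne : L.Nonempty) {M δ : ℝ} (hδ : 0 ≤ δ)
    (hLM : L ⊆ closedBall 0 M) (h : ∀ u : W, ‖u‖ = 1 → ∃ x ∈ L, M - δ < inner ℝ u x) :
    Near δ (closedBall 0 M) L := by
  refine ⟨fun y hy => ?_, fun x hx => ⟨x, hLM hx, by simpa using hδ⟩⟩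
  obtain ⟨x, hx, hmin⟩ := exists_norm_eq_iInf_of_complete_convex hne hL.2.isComplete hL.1 y
  have hsep := (norm_eq_iInf_iff_real_inner_le_zero hL.1 hx).1 hmin
  refine ⟨x, hx, ?_⟩
  by_contra hlt
  rw [not_le, dist_eq_norm] at hlt
  have hpos : 0 < ‖y - x‖ := hδ.trans_lt hlt
  obtain ⟨z, hz, hzu⟩ := h (‖y - x‖⁻¹ • (y - x)) (by
    rw [norm_smul, norm_inv, norm_norm, inv_mul_cancel₀ hpos.ne'])
  have h1 := hsep z hz
  have h2 : inner ℝ (y - x) z ≤ inner ℝ (y - x) y - ‖y - x‖ * ‖y - x‖ := by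
    have e : (inner ℝ (y - x) (y - x) : ℝ) = ‖y - x‖ * ‖y - x‖ := real_inner_self_eq_norm_mul_norm _
    rw [inner_sub_right] at h1 e
    linarith
  have h3 : inner ℝ (y - x) y ≤ ‖y - x‖ * M :=
    (real_inner_le_norm _ _).trans
      (mul_le_mul_of_nonneg_left (by simpa using hy) hpos.le)
  rw [real_inner_smul_left, inv_mul_eq_div, lt_div_iff₀ hpos] at hzu
  nlinarith

theorem norm_le_of_inner [Nontrivial W] {x : W} {M : ℝ}
    (h : ∀ u : W, ‖u‖ = 1 → inner ℝ u x ≤ M) : ‖x‖ ≤ M := by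
  rcases eq_or_ne x 0 with rfl | hx
  · obtain ⟨u, hu⟩ := exists_norm_eq W zero_le_one
    simpa using h u hu
  have hpos : 0 < ‖x‖ := norm_pos_iff.2 hx
  have := h (‖x‖⁻¹ • x) (by rw [norm_smul, norm_inv, norm_norm, inv_mul_cancel₀ hpos.ne'])
  rwa [real_inner_smul_left, real_inner_self_eq_norm_mul_norm, ← mul_assoc,
    inv_mul_cancel₀ hpos.ne', one_mul] at this

/-- A rotation mean of a body whose support function is at most `M - δ` in some direction lies in
a ball of radius smaller than `M` by a definite amount. -/
theorem avg_step {φ : Set W → ℂ} (ha : MinkAdd φ) (hc : HCont φ) (hrot : RotInv φ)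
    (hd : 2 ≤ Module.finrank ℝ W) {δ : ℝ} (hδ : 0 < δ) {R : ℝ} (hR : 0 ≤ R) :
    ∃ κ > 0, ∀ (L : Set W) (M ρ : ℝ), CB L → L.Nonempty → L ⊆ closedBall 0 M → M ≤ R →
      closedBall 0 ρ ⊆ L → (∃ u₀ : W, ‖u₀‖ = 1 ∧ ∀ x ∈ L, inner ℝ u₀ x ≤ M - δ) →
      ∃ L' : Set W, CB L' ∧ L'.Nonempty ∧ φ L' = φ L ∧ closedBall 0 ρ ⊆ L' ∧
        L' ⊆ closedBall 0 (M - κ) := by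
  classical
  have : Nontrivial W := Module.nontrivial_of_finrank_pos (R := ℝ) (by omega)
  obtain ⟨t, htS, htf, hcov⟩ := (isCompact_sphere (0 : W) 1).finite_cover_balls
    (e := δ / (2 * (R + 1))) (by positivity)
  set T := htf.toFinset with hT
  have hnet : ∀ w : W, ‖w‖ = 1 → ∃ u ∈ T, ‖w - u‖ * R ≤ δ / 2 := by
    intro w hw
    obtain ⟨u, hu, hwu⟩ := Set.mem_iUnion₂.1 (hcov (by simpa using hw : w ∈ sphere (0 : W) 1))
    refine ⟨u, htf.mem_toFinset.2 hu, ?_⟩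
    rw [mem_ball, dist_eq_norm] at hwu
    calc ‖w - u‖ * R ≤ δ / (2 * (R + 1)) * (R + 1) :=
          mul_le_mul hwu.le (by linarith) hR (by positivity)
      _ = δ / 2 := by field_simp
  have hTn : ∀ u ∈ T, ‖u‖ = 1 := fun u hu => by simpa using htS (htf.mem_toFinset.1 hu)
  have hTne : T.Nonempty := by
    obtain ⟨u, hu⟩ := exists_norm_eq W zero_le_one
    obtain ⟨v, hv, _⟩ := hnet u hu
    exact ⟨v, hv⟩
  have hTc : 0 < (T.card : ℝ) := Nat.cast_pos.2 hTne.card_pos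
  refine ⟨δ / 2 / T.card, by positivity, ?_⟩
  rintro L M ρ hL hLne hLM hMR hρ ⟨u₀, hu₀, hlow⟩
  have hex : ∀ w : W, ∃ p : W × W, p.1 ≠ 0 ∧ p.2 ≠ 0 ∧ (‖w‖ = 1 → refl p.1 (refl p.2 u₀) = w) := by
    intro w
    by_cases hw : ‖w‖ = 1
    · obtain ⟨u, v, h1, h2, h3⟩ := exists_refl_refl hd (hu₀.trans hw.symm)
      exact ⟨(u, v), h1, h2, fun _ => h3⟩
    · obtain ⟨e, he⟩ := exists_ne (0 : W)
      exact ⟨(e, e), he, he, fun h => absurd h hw⟩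
  choose p hp1 hp2 hp3 using hex
  let f : W → Set W := fun w => refl (p w).1 '' (refl (p w).2 '' L)
  have hfCB : ∀ w, CB (f w) ∧ (f w).Nonempty := fun w =>
    ⟨(hL.image _).image _, (hLne.image _).image _⟩
  obtain ⟨⟨hs1, hs2⟩, hs3⟩ := ha.sum T f fun w _ => hfCB w
  refine ⟨(T.card : ℝ)⁻¹ • ∑ w ∈ T, f w, hs1.smul _, hs2.smul_set, ?_, ?_, ?_⟩
  · rw [ha.homog hc hs1 hs2 (by positivity), hs3,
      Finset.sum_congr rfl fun w _ => hrot _ _ (hp1 w) (hp2 w) L hL, Finset.sum_const,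
      nsmul_eq_mul, ← mul_assoc]
    have : (((T.card : ℝ)⁻¹ : ℝ) : ℂ) * (T.card : ℂ) = 1 := by
      rw [← Complex.ofReal_natCast, ← Complex.ofReal_mul, inv_mul_cancel₀ hTc.ne']
      simp
    rw [this, one_mul]
  · intro y hy
    refine Set.mem_smul_set.2 ⟨(T.card : ℝ) • y, ?_, ?_⟩
    · rw [Set.mem_finsetSum]
      refine ⟨fun _ => y, fun {w} _ => ?_, ?_⟩
      · refine ⟨refl (p w).1 y, ⟨refl (p w).2 (refl (p w).1 y), hρ ?_, refl_refl _ _⟩,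
          refl_refl _ _⟩
        rw [mem_closedBall_zero_iff] at hy ⊢
        rwa [norm_refl, norm_refl]
      · rw [Finset.sum_const, Nat.cast_smul_eq_nsmul]
    · rw [smul_smul, inv_mul_cancel₀ hTc.ne', one_smul]
  · rintro _ ⟨x, hx, rfl⟩
    rw [Set.mem_finsetSum] at hx
    obtain ⟨g, hg, rfl⟩ := hx
    rw [mem_closedBall_zero_iff]
    refine norm_le_of_inner fun w hw => ?_
    obtain ⟨u, hu, hwu⟩ := hnet w hw
    have hnorm : ∀ v ∈ T, ‖g v‖ ≤ M := by
      intro v hv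
      obtain ⟨_, ⟨z, hz, h1⟩, h2⟩ := hg hv
      rw [← h2, norm_refl, ← h1, norm_refl]
      simpa using hLM hz
    have hM : ∀ v ∈ T, inner ℝ w (g v) ≤ M := fun v hv =>
      (real_inner_le_norm _ _).trans (by rw [hw, one_mul]; exact hnorm v hv)
    have hMu : inner ℝ w (g u) ≤ M - δ / 2 := by
      have e1 : (inner ℝ w (g u) : ℝ) = inner ℝ (w - u) (g u) + inner ℝ u (g u) := by
        rw [← inner_add_left, sub_add_cancel]
      have e2 : (inner ℝ (w - u) (g u) : ℝ) ≤ ‖w - u‖ * R :=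
        (real_inner_le_norm _ _).trans
          (mul_le_mul_of_nonneg_left ((hnorm u hu).trans hMR) (norm_nonneg _))
      have e3 : (inner ℝ u (g u) : ℝ) ≤ M - δ := by
        obtain ⟨_, ⟨z, hz, h1⟩, h2⟩ := hg hu
        rw [← h2, ← h1]
        nth_rw 1 [← hp3 u (hTn u hu)]
        rw [inner_refl_refl, inner_refl_refl]
        exact hlow z hz
      linarith
    have hsum : ∑ v ∈ T, inner ℝ w (g v) ≤ T.card * M - δ / 2 := by
      rw [← Finset.add_sum_erase T _ hu]
      have : ∑ v ∈ T.erase u, inner ℝ w (g v) ≤ (T.card - 1) * M := by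
        refine (Finset.sum_le_card_nsmul _ _ M fun v hv => hM v (Finset.mem_of_mem_erase hv)).trans
          (le_of_eq ?_)
        rw [Finset.card_erase_of_mem hu, nsmul_eq_mul, Nat.cast_sub hTne.card_pos, Nat.cast_one]
      linarith
    rw [inner_smul_right, inner_sum]
    calc (T.card : ℝ)⁻¹ * ∑ v ∈ T, inner ℝ w (g v) ≤ (T.card : ℝ)⁻¹ * (T.card * M - δ / 2) :=
          mul_le_mul_of_nonneg_left hsum (by positivity)
      _ = M - δ / 2 / T.card := by field_simp

/-- Every body has the same value as some ball. The radius is the infimum of the radii of balls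
containing a body obtained from it by iterated rotation means. -/
theorem exists_ball {φ : Set W → ℂ} (ha : MinkAdd φ) (hc : HCont φ) (hrot : RotInv φ)
    (hd : 2 ≤ Module.finrank ℝ W) {K : Set W} (hK : CB K) (hne : K.Nonempty) {ρ : ℝ}
    (hρ : closedBall 0 ρ ⊆ K) : ∃ m ≥ 0, ρ ≤ m ∧ φ (closedBall 0 m) = φ K := by
  have : Nontrivial W := Module.nontrivial_of_finrank_pos (R := ℝ) (by omega)
  let P : Set ℝ := {M | ∃ L : Set W, CB L ∧ L.Nonempty ∧ φ L = φ K ∧ closedBall 0 ρ ⊆ L ∧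
    L ⊆ closedBall 0 M}
  have hP0 : ∀ M ∈ P, 0 ≤ M := by
    rintro M ⟨L, _, ⟨x, hx⟩, _, _, h⟩
    exact (norm_nonneg x).trans (by simpa using h hx)
  have hPρ : ∀ M ∈ P, ρ ≤ M := by
    rintro M hM
    rcases lt_or_ge ρ 0 with hρ0 | hρ0
    · exact hρ0.le.trans (hP0 M hM)
    obtain ⟨L, _, _, _, h1, h2⟩ := hM
    obtain ⟨x, hx⟩ := exists_norm_eq W hρ0
    have := h2 (h1 (by simpa using hx.le : x ∈ closedBall (0 : W) ρ))
    rw [mem_closedBall_zero_iff] at this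
    linarith
  obtain ⟨R, hR⟩ := hK.2.isBounded.exists_norm_le
  have hRP : R ∈ P := ⟨K, hK, hne, rfl, hρ, fun x hx => by simpa using hR x hx⟩
  have hbdd : BddBelow P := ⟨0, hP0⟩
  set m := sInf P with hm
  have hm0 : 0 ≤ m := le_csInf ⟨R, hRP⟩ hP0
  have hCBm : CB (closedBall (0 : W) m) := ⟨convex_closedBall _ _, isCompact_closedBall _ _⟩
  refine ⟨m, hm0, le_csInf ⟨R, hRP⟩ hPρ, ?_⟩
  symm
  rw [← sub_eq_zero, ← norm_le_zero_iff]
  refine le_of_forall_pos_le_add fun ε hε => ?_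
  rw [zero_add]
  obtain ⟨δ, hδ, hcont⟩ := hc (closedBall 0 m) hCBm ⟨0, by simpa using hm0⟩ ε hε
  obtain ⟨κ, hκ, hstep⟩ := avg_step ha hc hrot hd (half_pos hδ) (R := R + 1)
    (by linarith [hP0 R hRP])
  obtain ⟨M, hMP, hMlt⟩ := exists_lt_of_csInf_lt ⟨R, hRP⟩
    (lt_add_of_pos_right m (lt_min (lt_min hκ (half_pos hδ)) one_pos))
  have l1 : M < m + κ := hMlt.trans_le (by gcongr; exact (min_le_left _ _).trans (min_le_left _ _))
  have l2 : M < m + δ / 2 :=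
    hMlt.trans_le (by gcongr; exact (min_le_left _ _).trans (min_le_right _ _))
  have l3 : M < m + 1 := hMlt.trans_le (by gcongr; exact min_le_right _ _)
  have hmR : m ≤ R := csInf_le hbdd hRP
  have hmM : m ≤ M := csInf_le hbdd hMP
  obtain ⟨L, hL, hLne, hLφ, hLρ, hLM⟩ := hMP
  have hbig : ∀ u : W, ‖u‖ = 1 → ∃ x ∈ L, M - δ / 2 < inner ℝ u x := by
    by_contra hcon
    push Not at hcon
    obtain ⟨L', h1, h2, h3, h4, h5⟩ := hstep L M ρ hL hLne hLM (by linarith) hLρ hcon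
    have : m ≤ M - κ := csInf_le hbdd ⟨L', h1, h2, h3.trans hLφ, h4, h5⟩
    linarith
  have hnear := near_ball hL hLne (half_pos hδ).le hLM hbig
  rw [← hLφ]
  refine hcont L hL hLne ⟨fun x hx => ?_, fun y hy => ?_⟩
  · obtain ⟨y, hy, h⟩ := hnear.1 x (closedBall_subset_closedBall hmM hx)
    exact ⟨y, hy, by linarith⟩
  · have hyM : ‖y‖ ≤ M := by simpa using hLM hy
    rcases le_or_gt ‖y‖ m with hym | hym
    · exact ⟨y, by simpa using hym, by simpa using hδ.le⟩
    · have hpos : 0 < ‖y‖ := hm0.trans_lt hym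
      refine ⟨(m / ‖y‖) • y, ?_, ?_⟩
      · rw [mem_closedBall_zero_iff, norm_smul, norm_div, norm_norm, div_mul_cancel₀ _ hpos.ne',
          Real.norm_of_nonneg hm0]
      · have : (m / ‖y‖) • y - y = (m / ‖y‖ - 1) • y := by rw [sub_smul, one_smul]
        rw [dist_eq_norm, this, norm_smul, ← norm_norm y, ← norm_mul, norm_norm, sub_mul,
          div_mul_cancel₀ _ hpos.ne', one_mul, Real.norm_eq_abs, abs_sub_comm,
          abs_of_pos (by linarith)]
        linarith

end Homog

/-! ### Simple invariant valuations vanishing on cubes -/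

section Kernel

theorem parallelepiped_sumElim {W : Type*} [AddCommGroup W] [Module ℝ W] {ι κ : Type*}
    [Fintype ι] [Fintype κ] (v : ι → W) (w : κ → W) :
    parallelepiped (Sum.elim v w) = parallelepiped v + parallelepiped w := by
  simp [parallelepiped_eq_sum_segment, Fintype.sum_sum_type]

theorem orthonormal_sumElim {W : Type*} [NormedAddCommGroup W] [InnerProductSpace ℝ W]
    {ι κ : Type*} {v : ι → W} {w : κ → W} (hv : Orthonormal ℝ v) (hw : Orthonormal ℝ w)
    (h : ∀ i k, inner ℝ (v i) (w k) = 0) : Orthonormal ℝ (Sum.elim v w) := by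
  refine ⟨?_, ?_⟩
  · rintro (i | k)
    · exact hv.1 i
    · exact hw.1 k
  · rintro (i | k) (i' | k') hne
    · exact hv.2 fun h => hne (by rw [h])
    · exact h i k'
    · simp only [Sum.elim_inr, Sum.elim_inl]
      rw [real_inner_comm]
      exact h i' k
    · exact hw.2 fun h => hne (by rw [h])

variable {W : Type u} [NormedAddCommGroup W] [InnerProductSpace ℝ W] [FiniteDimensional ℝ W]

/-- On a line all bodies are segments, translates of dilates of the unit cube. -/
theorem ZV.vanish_dim_one {φ : Set W → ℂ} (hφ : ZV φ) (ha : MinkAdd φ) (hcube : Cubes φ)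
    (hd : Module.finrank ℝ W = 1) {K : Set W} (hK : CB K) (hne : K.Nonempty) : φ K = 0 := by
  have : Nontrivial W := Module.nontrivial_of_finrank_pos (R := ℝ) (by omega)
  obtain ⟨e, he⟩ := exists_norm_eq W zero_le_one
  have he0 : e ≠ 0 := by rintro rfl; simp at he
  let f : ℝ ≃ₗ[ℝ] W := LinearMap.linearEquivOfInjective (LinearMap.toSpanSingleton ℝ W e)
    (LinearMap.ker_eq_bot.1 (LinearMap.ker_toSpanSingleton ℝ he0)) (by simp [hd])
  have hf : ∀ s, f s = s • e := fun s => rfl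
  obtain ⟨a, b, hab, hI⟩ := (hK.image f.symm.toLinearMap).eq_Icc (hne.image _)
  have hK' : K = f '' Set.Icc a b := by
    rw [← hI, LinearEquiv.coe_coe, LinearEquiv.image_symm_eq_preimage,
      Set.image_preimage_eq _ f.surjective]
  have hQ : parallelepiped (fun _ : Unit => e) = f '' Set.Icc 0 1 := by
    rw [parallelepiped_eq_sum_segment]
    simp only [Finset.univ_unique, Finset.sum_const, Finset.card_singleton, one_smul]
    rw [segment_eq_image]
    ext x
    simp [hf]
  have h0 : φ (f '' Set.Icc 0 1) = 0 := by
    rw [← hQ]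
    refine hcube Unit _ ⟨fun _ => he, fun i j h => absurd (Subsingleton.elim i j) h⟩ ?_
    simp [hd]
  have hCB : CB (f '' Set.Icc 0 1) := (CB.Icc 0 1).image f.toLinearMap
  have hne' : (f '' Set.Icc 0 1).Nonempty := ⟨_, 0, by simp, rfl⟩
  have hKt : K = (fun y => a • e + y) '' ((b - a) • (f '' Set.Icc 0 1)) := by
    rw [hK']
    ext x
    constructor
    · rintro ⟨s, hs, rfl⟩
      rcases eq_or_lt_of_le hab with rfl | hlt
      · refine ⟨_, ⟨_, ⟨0, by simp, rfl⟩, rfl⟩, ?_⟩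
        have : s = a := le_antisymm hs.2 hs.1
        simp [hf, this]
      · refine ⟨_, ⟨_, ⟨(s - a) / (b - a), ?_, rfl⟩, rfl⟩, ?_⟩
        · have : 0 < b - a := by linarith
          exact ⟨div_nonneg (by linarith [hs.1]) this.le, (div_le_one this).2 (by linarith [hs.2])⟩
        · have : b - a ≠ 0 := by linarith
          simp only [hf, smul_smul, ← add_smul]
          rw [mul_div_cancel₀ _ this]
          congr 1
          ring
    · rintro ⟨_, ⟨_, ⟨s, hs, rfl⟩, rfl⟩, rfl⟩
      refine ⟨a + (b - a) * s, ⟨?_, ?_⟩, ?_⟩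
      · have := mul_nonneg (by linarith : 0 ≤ b - a) hs.1
        linarith
      · have := mul_le_mul_of_nonneg_left hs.2 (by linarith : 0 ≤ b - a)
        linarith
      · simp only [hf, smul_smul, ← add_smul]
  rw [hKt, hφ.sv.trans _ _ (hCB.smul _), ha.homog hφ.cont hCB hne' (by linarith), h0, mul_zero]

/-- The unit cube, translated so that it contains a ball around the origin, has the same value as a
ball of positive radius. Thus `φ` vanishes on that ball, hence on all balls by homogeneity, and hence
on every body. -/
theorem ZV.vanish_of_two_le {φ : Set W → ℂ} (hφ : ZV φ) (ha : MinkAdd φ) (hcube : Cubes φ)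
    (hd : 2 ≤ Module.finrank ℝ W) {K : Set W} (hK : CB K) (hne : K.Nonempty) : φ K = 0 := by
  have hball : ∀ m : ℝ, closedBall (0 : W) m = m • closedBall (0 : W) 1 ∨ m ≤ 0 := by
    intro m
    rcases le_or_gt m 0 with h | h
    · exact Or.inr h
    · left
      rw [smul_closedBall' h.ne']
      simp [abs_of_pos h]
  have hCB1 : CB (closedBall (0 : W) 1) := ⟨convex_closedBall _ _, isCompact_closedBall _ _⟩
  have hne1 : (closedBall (0 : W) 1).Nonempty := ⟨0, by simp⟩
  have hB : φ (closedBall 0 1) = 0 := by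
    let b := stdOrthonormalBasis ℝ W
    let Q := (fun y => (-(2 : ℝ)⁻¹ • ∑ i, b i) + y) '' parallelepiped b
    have hQ : φ Q = 0 := by
      rw [hφ.sv.trans _ _ (CB.parallelepiped _)]
      exact hcube _ b b.orthonormal (by simp)
    have hsub : closedBall 0 (2 : ℝ)⁻¹ ⊆ Q := by
      intro x hx
      rw [mem_closedBall_zero_iff] at hx
      have hin : ∀ i, |inner ℝ (b i) x| ≤ (2 : ℝ)⁻¹ := fun i => by
        have h := abs_real_inner_le_norm (b i) x
        rw [b.norm_eq_one, one_mul] at h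
        exact h.trans hx
      refine ⟨(2 : ℝ)⁻¹ • ∑ i, b i + x, ?_, by simp⟩
      rw [mem_parallelepiped_iff]
      refine ⟨fun i => 2⁻¹ + inner ℝ (b i) x, ⟨fun i => ?_, fun i => ?_⟩, ?_⟩
      · have := neg_le_of_abs_le (hin i)
        simp only [Pi.zero_apply]
        linarith
      · have := le_of_abs_le (hin i)
        simp only [Pi.one_apply]
        linarith
      · simp only [add_smul, Finset.sum_add_distrib, ← Finset.smul_sum]
        rw [b.sum_repr' x]
    obtain ⟨m, hm0, hm, hmφ⟩ := exists_ball ha hφ.cont hφ.rot hd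
      ((CB.parallelepiped b).translate _) (⟨_, hsub (mem_closedBall_self (by norm_num))⟩) hsub
    have hmpos : 0 < m := lt_of_lt_of_le (by norm_num) hm
    rw [(hball m).resolve_right (not_le.2 hmpos), ha.homog hφ.cont hCB1 hne1 hm0] at hmφ
    have := hmφ.trans hQ
    exact (mul_eq_zero.1 this).resolve_left (by exact_mod_cast hmpos.ne')
  obtain ⟨m, hm0, _, hmφ⟩ := exists_ball ha hφ.cont hφ.rot hd hK hne (ρ := -1) (by simp)
  rw [← hmφ]
  rcases hball m with h | h
  · rw [h, ha.homog hφ.cont hCB1 hne1 hm0, hB, mul_zero]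
  · have hm : m = 0 := le_antisymm h hm0
    have : Nontrivial W := Module.nontrivial_of_finrank_pos (R := ℝ) (by omega)
    have h0 : closedBall (0 : W) 0 = (0 : ℝ) • closedBall (0 : W) 1 := by
      rw [Set.zero_smul_set hne1, closedBall_zero]
      rfl
    rw [hm, h0, ha.homog hφ.cont hCB1 hne1 le_rfl, hB, mul_zero]

end Kernel

/-- A simple, translation and rotation invariant continuous valuation vanishing on the unit cubes
vanishes identically. -/
theorem ZV.eq_zero (d : ℕ) : ∀ (W : Type u) [NormedAddCommGroup W] [InnerProductSpace ℝ W]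
    [FiniteDimensional ℝ W], Module.finrank ℝ W = d → 0 < d → ∀ φ : Set W → ℂ, ZV φ → Cubes φ →
    ∀ K, CB K → φ K = 0 := by
  induction d using Nat.strong_induction_on with
  | _ d ih =>
  intro W _ _ _ hd hpos φ hφ hcube K hK
  have hHV : HV φ 0 := by
    intro E F hEF _ hE hF A B hA hB hAE hBF
    rcases B.eq_empty_or_nonempty with rfl | hBne
    · simp [hφ.sv.empty]
    rcases A.eq_empty_or_nonempty with rfl | hAne
    · simp [hφ.sv.empty]
    have hFE : F ≤ Eᗮ := fun y hy x hx => hEF x hx y hy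
    have hEo : Eᗮ ≠ ⊥ := fun h => hF (le_bot_iff.1 (h ▸ hFE))
    have hsum := Submodule.finrank_add_finrank_orthogonal E
    have hE1 : 0 < Module.finrank ℝ E := Submodule.one_le_finrank_iff.2 hE
    have hE2 : 0 < Module.finrank ℝ Eᗮ := Submodule.one_le_finrank_iff.2 hEo
    obtain ⟨A', hA', rfl⟩ : ∃ A' : Set E, CB A' ∧ E.subtype '' A' = A := by
      refine ⟨E.subtype ⁻¹' A, ⟨hA.1.linear_preimage _, ?_⟩, ?_⟩
      · exact (Submodule.closed_of_finiteDimensional E).isClosedEmbedding_subtypeVal.isCompact_preimage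
          hA.2
      · rw [Set.image_preimage_eq_of_subset]
        simpa using hAE
    obtain ⟨B', hB', rfl⟩ : ∃ B' : Set Eᗮ, CB B' ∧ Eᗮ.subtype '' B' = B := by
      refine ⟨Eᗮ.subtype ⁻¹' B, ⟨hB.1.linear_preimage _, ?_⟩, ?_⟩
      · exact (Submodule.closed_of_finiteDimensional Eᗮ).isClosedEmbedding_subtypeVal.isCompact_preimage
          hB.2
      · rw [Set.image_preimage_eq_of_subset]
        simpa using hBF.trans hFE
    have horth : ∀ x ∈ Eᗮ, ∀ y ∈ E.subtype '' A', inner ℝ x y = 0 := by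
      rintro x hx _ ⟨y, hy, rfl⟩
      exact Submodule.inner_left_of_mem_orthogonal y.2 hx
    rw [add_comm]
    refine ih _ (by omega) Eᗮ rfl hE2 _ (hφ.restrict Eᗮ hA hAne horth) ?_ B' hB'
    intro κ _ w hw hcard
    have horth' : ∀ x ∈ E, ∀ y ∈ Eᗮ.subtype '' parallelepiped w, inner ℝ x y = 0 := by
      rintro x hx _ ⟨y, hy, rfl⟩
      exact Submodule.inner_right_of_mem_orthogonal hx y.2
    beta_reduce
    rw [add_comm]
    refine ih _ (by omega) E rfl hE1 _ (hφ.restrict E ((CB.parallelepiped w).image _)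
      (Set.Nonempty.image _ ⟨_, 0, by simp, rfl⟩) horth') ?_ A' hA'
    intro ι _ v hv hcard'
    beta_reduce
    rw [image_parallelepiped, image_parallelepiped, ← parallelepiped_sumElim]
    refine hcube _ _ (orthonormal_sumElim ?_ ?_ ?_) (by simp [hcard, hcard', hsum])
    · exact hv.comp_linearIsometry E.subtypeₗᵢ
    · exact hw.comp_linearIsometry Eᗮ.subtypeₗᵢ
    · intro i k
      exact Submodule.inner_right_of_mem_orthogonal (v i).2 (w k).2
  obtain ⟨d', rfl⟩ : ∃ d', d = d' + 1 := ⟨d - 1, by omega⟩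
  have ha := (polyAdd_of_HV d' W hd φ 0 hφ.sv hHV).minkAdd hφ.cont
  rcases K.eq_empty_or_nonempty with rfl | hne
  · exact hφ.sv.empty
  rcases Nat.eq_zero_or_pos d' with rfl | hd'
  · exact hφ.vanish_dim_one ha hcube hd hK hne
  · exact hφ.vanish_of_two_le ha hcube (by omega) hK hne

/-! ### Invariant valuations are determined by their values on cubes -/

section Unique
variable {W : Type*} [NormedAddCommGroup W] [InnerProductSpace ℝ W]

/-- Translation and rotation invariant continuous valuations, as functions on all sets which are
only constrained on compact convex ones. -/
structure TV (φ : Set W → ℂ) : Prop where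
  empty : φ ∅ = 0
  val : ∀ A B, CB A → CB B → Convex ℝ (A ∪ B) → φ (A ∪ B) + φ (A ∩ B) = φ A + φ B
  trans : ∀ A x, CB A → φ ((fun y => x + y) '' A) = φ A
  rot : RotInv φ
  cont : HCont φ

theorem reflection_eq_refl (u x : W) : (ℝ ∙ u)ᗮ.reflection x = refl u x := by
  rw [Submodule.reflection_orthogonal_apply, Submodule.reflection_singleton_apply, refl_apply,
    real_inner_self_eq_norm_sq, neg_sub, two_smul, ← add_smul]
  simp only [RCLike.ofReal_real_eq_id, id_eq]
  congr 2
  ring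

/-- The reflection in an edge direction, followed by a translation, maps a cube to itself. -/
theorem mem_parallelepiped_update {ι : Type*} [Fintype ι] {v : ι → W} (hv : Orthonormal ℝ v)
    (i₀ : ι) : parallelepiped v = (fun y => v i₀ + y) '' (refl (v i₀) '' parallelepiped v) := by
  classical
  have key : ∀ x ∈ parallelepiped v, v i₀ + refl (v i₀) x ∈ parallelepiped v := by
    intro x hx
    obtain ⟨t, ht, rfl⟩ := (mem_parallelepiped_iff v x).1 hx
    refine (mem_parallelepiped_iff v _).2 ⟨Function.update t i₀ (1 - t i₀), ?_, ?_⟩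
    · constructor <;> intro i <;> by_cases hi : i = i₀
      · subst hi; simpa using ht.2 i
      · simpa [hi] using ht.1 i
      · subst hi; simpa using ht.1 i
      · simpa [hi] using ht.2 i
    · have h1 : ∀ s : ι → ℝ, ∑ i, s i • v i = s i₀ • v i₀ + ∑ i ∈ Finset.univ.erase i₀, s i • v i :=
        fun s => (Finset.add_sum_erase _ _ (Finset.mem_univ i₀)).symm
      have h2 : ∑ i ∈ Finset.univ.erase i₀, Function.update t i₀ (1 - t i₀) i • v i =
          ∑ i ∈ Finset.univ.erase i₀, t i • v i :=
        Finset.sum_congr rfl fun i hi => by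
          rw [Function.update_of_ne (Finset.ne_of_mem_erase hi)]
      rw [h1 t, h1 (Function.update _ _ _), h2, Function.update_self, map_add, map_smul, refl_self,
        map_sum, Finset.sum_congr rfl fun i hi => ?_]
      · rw [sub_smul, one_smul, smul_neg]; abel
      · rw [map_smul, refl_of_orthogonal (hv.2 (Finset.ne_of_mem_erase hi).symm)]
  ext x
  constructor
  · intro hx
    refine ⟨_, ⟨_, key x hx, rfl⟩, ?_⟩
    simp [refl_self, refl_refl]
  · rintro ⟨_, ⟨y, hy, rfl⟩, rfl⟩
    exact key y hy

variable [FiniteDimensional ℝ W]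

/-- Invariance under all reflections, not only under products of two, holds on cubes, because a cube
is mirror symmetric. -/
theorem TV.cube_refl {φ : Set W → ℂ} (hφ : TV φ) {ι : Type*} [Fintype ι] {v : ι → W}
    (hv : Orthonormal ℝ v) (u : W) : φ (refl u '' parallelepiped v) = φ (parallelepiped v) := by
  rcases eq_or_ne u 0 with rfl | hu
  · simp [refl_apply]
  rcases isEmpty_or_nonempty ι with hι | ⟨⟨i₀⟩⟩
  · simp [parallelepiped_eq_sum_segment]
    rfl
  nth_rw 1 [mem_parallelepiped_update hv i₀]
  rw [Set.image_image]
  have e : (fun x => refl u (v i₀ + x)) '' (refl (v i₀) '' parallelepiped v) =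
      (fun y => refl u (v i₀) + y) '' (refl u '' (refl (v i₀) '' parallelepiped v)) := by
    simp only [Set.image_image, map_add]
  have hCB := CB.parallelepiped v
  rw [e, hφ.trans _ _ ((hCB.image _).image _)]
  exact hφ.rot _ _ hu (hv.ne_zero i₀) _ hCB

theorem TV.cube_isometry {φ : Set W → ℂ} (hφ : TV φ) {ι : Type*} [Fintype ι] {v : ι → W}
    (hv : Orthonormal ℝ v) (g : W ≃ₗᵢ[ℝ] W) :
    φ (parallelepiped (g ∘ v)) = φ (parallelepiped v) := by
  obtain ⟨l, hl, rfl⟩ := g.reflections_generate_dim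
  clear hl
  induction l with
  | nil => rfl
  | cons a l ih =>
    rw [← ih]
    set g' := (l.map fun v => (ℝ ∙ v)ᗮ.reflection).prod
    have : ((List.map (fun v => (ℝ ∙ v)ᗮ.reflection) (a :: l)).prod ∘ v : ι → W) =
        refl a ∘ (g' ∘ v) := by
      ext i
      simp only [List.map_cons, List.prod_cons, Function.comp_apply]
      rw [← reflection_eq_refl]
      rfl
    rw [this, ← image_parallelepiped]
    exact hφ.cube_refl (hv.comp_linearIsometry g'.toLinearIsometry) a

/-- The standard `j`-dimensional unit cubes with respect to an orthonormal basis. -/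
def stdCube {n : ℕ} (b : OrthonormalBasis (Fin n) ℝ W) (j : ℕ) : Set W :=
  parallelepiped fun i : {i : Fin n // (i : ℕ) < j} => b i

/-- All unit cubes of the same dimension have the same value. -/
theorem TV.cube_eq {φ : Set W → ℂ} (hφ : TV φ) {n : ℕ} (b : OrthonormalBasis (Fin n) ℝ W)
    {ι : Type*} [Fintype ι] {v : ι → W} (hv : Orthonormal ℝ v) :
    φ (parallelepiped v) = φ (stdCube b (Fintype.card ι)) := by
  classical
  have hn : Module.finrank ℝ W = n := by simp [Module.finrank_eq_card_basis b.toBasis]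
  have hle : Fintype.card ι ≤ n := by
    rw [← hn]; exact hv.linearIndependent.fintype_card_le_finrank
  have hcard : Fintype.card {i : Fin n // (i : ℕ) < Fintype.card ι} = Fintype.card ι := by
    rw [Fintype.card_subtype]
    rw [Fin.card_filter_val_lt, min_eq_right hle]
  let e : {i : Fin n // (i : ℕ) < Fintype.card ι} ≃ ι := Fintype.equivOfCardEq hcard
  let v' : Fin n → W := fun i => if h : (i : ℕ) < Fintype.card ι then v (e ⟨i, h⟩) else 0
  let s : Set (Fin n) := {i | (i : ℕ) < Fintype.card ι}
  have hs : Orthonormal ℝ (s.domRestrict v') := by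
    have : s.domRestrict v' = v ∘ fun i : s => e ⟨i.1, i.2⟩ := by
      funext i
      exact dif_pos i.2
    rw [this]
    refine hv.comp _ fun i j h => ?_
    have := e.injective h
    simpa [Subtype.ext_iff] using this
  obtain ⟨b', hb'⟩ := hs.exists_orthonormalBasis_extension_of_card_eq (by simp [hn])
  have hiso := hφ.cube_isometry (v := fun i : {i : Fin n // (i : ℕ) < Fintype.card ι} => b i)
    (b.orthonormal.comp _ Subtype.val_injective) (b.equiv b' (Equiv.refl _))
  rw [stdCube, ← hiso, ← parallelepiped_comp_equiv v e]
  congr 2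
  funext i
  have h := hb' i.1 i.2
  simp only [Function.comp_apply]
  rw [OrthonormalBasis.equiv_apply_basis, Equiv.refl_apply, h]
  change v (e i) = dite _ _ _
  rw [dif_pos i.2]

/-- A translation and rotation invariant continuous valuation vanishing on the standard cubes of
all dimensions vanishes on all bodies of dimension at most `k`, by induction on `k`: the valuation
is simple on `k`-dimensional subspaces. -/
theorem TV.eq_zero_aux {φ : Set W → ℂ} (hφ : TV φ) {n : ℕ} (b : OrthonormalBasis (Fin n) ℝ W)
    (h : ∀ j ≤ n, φ (stdCube b j) = 0) (k : ℕ) : ∀ E : Submodule ℝ W, Module.finrank ℝ E = k →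
    ∀ A : Set E, CB A → φ (E.subtype '' A) = 0 := by
  have hn : Module.finrank ℝ W = n := by simp [Module.finrank_eq_card_basis b.toBasis]
  induction k with
  | zero =>
    intro E hE A hA
    have hb : E = ⊥ := Submodule.finrank_eq_zero.1 hE
    subst hb
    rcases A.eq_empty_or_nonempty with rfl | ⟨x, hx⟩
    · simpa using hφ.empty
    have : (⊥ : Submodule ℝ W).subtype '' A = stdCube b 0 := by
      have hA : A = {0} := Set.eq_singleton_iff_unique_mem.2
        ⟨by rwa [← Subsingleton.elim x 0], fun y _ => Subsingleton.elim y 0⟩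
      have : IsEmpty {i : Fin n // (i : ℕ) < 0} := ⟨fun i => absurd i.2 (by omega)⟩
      rw [hA, stdCube, parallelepiped_eq_sum_segment]
      simp only [Set.image_singleton, map_zero, Finset.univ_eq_empty, Finset.sum_empty]
      rfl
    rw [this]
    exact h 0 (Nat.zero_le _)
  | succ k ih =>
    intro E hE A hA
    have hinj := E.injective_subtype
    have hZ : ZV (fun A : Set E => φ (E.subtype '' A)) :=
      { sv :=
        { empty := by simpa using hφ.empty
          val := by
            intro A B hA hB hAB
            have := hφ.val _ _ (hA.image E.subtype) (hB.image E.subtype)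
              (by rw [← Set.image_union]; exact hAB.linear_image _)
            rwa [← Set.image_union, ← Set.image_inter hinj] at this
          trans := by
            intro A x hA
            rw [← hφ.trans _ (x : W) (hA.image E.subtype), Set.image_image, Set.image_image]
            simp
          simple := by
            intro A f a hA hf hfa
            rcases A.eq_empty_or_nonempty with rfl | ⟨x, hx⟩
            · simpa using hφ.empty
            have hk : Module.finrank ℝ ((LinearMap.ker f).map E.subtype) = k := by
              rw [Submodule.finrank_map_subtype_eq]
              have := Module.Dual.finrank_ker_add_one_of_ne_zero (f := f) hf
              omega
            let A₀ : Set E := (fun y => -x + y) '' A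
            have hA₀ : CB A₀ := hA.translate _
            have hker : ∀ y ∈ A₀, f y = 0 := by
              rintro _ ⟨y, hy, rfl⟩
              rw [map_add, map_neg, hfa x hx, hfa y hy, neg_add_cancel]
            let G := (LinearMap.ker f).map E.subtype
            have hG : E.subtype '' A₀ = G.subtype '' (G.subtype ⁻¹' (E.subtype '' A₀)) := by
              rw [Set.image_preimage_eq_of_subset]
              rintro _ ⟨y, hy, rfl⟩
              simp only [Submodule.coe_subtype, Subtype.range_coe_subtype]
              exact ⟨y, LinearMap.mem_ker.2 (hker y hy), rfl⟩
            have h0 : φ (E.subtype '' A₀) = 0 := by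
              rw [hG]
              have hC := hA₀.image E.subtype
              exact ih G hk _ ⟨hC.1.linear_preimage _,
                (Submodule.closed_of_finiteDimensional
                  G).isClosedEmbedding_subtypeVal.isCompact_preimage hC.2⟩
            rw [← h0, ← hφ.trans _ (-(x : W)) (hA.image E.subtype), Set.image_image,
              Set.image_image]
            simp }
        rot := by
          intro u v hu hv A hA
          have himg : ∀ (u : E) (A : Set E), E.subtype '' (refl u '' A) =
              refl (u : W) '' (E.subtype '' A) := by
            intro u A
            rw [Set.image_image, Set.image_image]
            simp [refl_apply]
          beta_reduce
          rw [himg, himg]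
          exact hφ.rot u v (by simpa using hu) (by simpa using hv) _ (hA.image E.subtype)
        cont := by
          intro K hK hKne ε hε
          obtain ⟨δ, hδ, h⟩ := hφ.cont _ (hK.image E.subtype) (hKne.image _) ε hε
          refine ⟨δ, hδ, fun L hL hLne hKL => h _ (hL.image E.subtype) (hLne.image _) ⟨?_, ?_⟩⟩
          · rintro _ ⟨x, hx, rfl⟩
            obtain ⟨y, hy, h⟩ := hKL.1 x hx
            exact ⟨_, ⟨y, hy, rfl⟩, h⟩
          · rintro _ ⟨x, hx, rfl⟩
            obtain ⟨y, hy, h⟩ := hKL.2 x hx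
            exact ⟨_, ⟨y, hy, rfl⟩, h⟩ }
    refine ZV.eq_zero (k + 1) E hE (Nat.succ_pos k) _ hZ ?_ A hA
    intro ι _ v hv hcard
    beta_reduce
    have hE' := hφ.cube_eq b (v := E.subtype ∘ v) (hv.comp_linearIsometry E.subtypeₗᵢ)
    rw [image_parallelepiped, hE', hcard]
    exact h _ (hn ▸ E.finrank_le)

/-- An invariant continuous valuation is determined by its values on the unit cubes of dimensions
`0, …, n`. -/
theorem TV.eq_zero {φ : Set W → ℂ} (hφ : TV φ) {n : ℕ} (b : OrthonormalBasis (Fin n) ℝ W)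
    (h : ∀ j ≤ n, φ (stdCube b j) = 0) {A : Set W} (hA : CB A) : φ A = 0 := by
  have := hφ.eq_zero_aux b h _ ⊤ rfl (Submodule.subtype ⊤ ⁻¹' A) ⟨hA.1.linear_preimage _,
    (Submodule.closed_of_finiteDimensional _).isClosedEmbedding_subtypeVal.isCompact_preimage hA.2⟩
  rwa [Set.image_preimage_eq_of_subset (by simp)] at this

end Unique

/-! ### Linear combinations, convex bodies and parallel volumes -/

section Linear
variable {W : Type*} [NormedAddCommGroup W] [InnerProductSpace ℝ W]

theorem TV.const_mul {φ : Set W → ℂ} (hφ : TV φ) (c : ℂ) : TV (fun A => c * φ A) where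
  empty := by simp [hφ.empty]
  val A B hA hB h := by rw [← mul_add, ← mul_add, hφ.val A B hA hB h]
  trans A x hA := by rw [hφ.trans A x hA]
  rot u v hu hv A hA := by beta_reduce; rw [hφ.rot u v hu hv A hA]
  cont K hK hne ε hε := by
    obtain ⟨δ, hδ, h⟩ := hφ.cont K hK hne (ε / (‖c‖ + 1)) (by positivity)
    refine ⟨δ, hδ, fun L hL hLne hKL => ?_⟩
    rw [← mul_sub, norm_mul]
    have h1 := h L hL hLne hKL
    rw [le_div_iff₀ (by positivity)] at h1
    nlinarith [norm_nonneg (φ L - φ K), norm_nonneg c]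

theorem TV.add {φ ψ : Set W → ℂ} (hφ : TV φ) (hψ : TV ψ) : TV (fun A => φ A + ψ A) where
  empty := by simp [hφ.empty, hψ.empty]
  val A B hA hB h := by
    have h1 := hφ.val A B hA hB h
    have h2 := hψ.val A B hA hB h
    linear_combination h1 + h2
  trans A x hA := by rw [hφ.trans A x hA, hψ.trans A x hA]
  rot u v hu hv A hA := by beta_reduce; rw [hφ.rot u v hu hv A hA, hψ.rot u v hu hv A hA]
  cont K hK hne ε hε := by
    obtain ⟨δ, hδ, h⟩ := hφ.cont K hK hne (ε / 2) (by positivity)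
    obtain ⟨δ', hδ', h'⟩ := hψ.cont K hK hne (ε / 2) (by positivity)
    refine ⟨min δ δ', lt_min hδ hδ', fun L hL hLne hKL => ?_⟩
    have m1 : Near δ K L := ⟨fun x hx => (hKL.1 x hx).imp fun y hy =>
      ⟨hy.1, hy.2.trans (min_le_left _ _)⟩, fun x hx => (hKL.2 x hx).imp fun y hy =>
      ⟨hy.1, hy.2.trans (min_le_left _ _)⟩⟩
    have m2 : Near δ' K L := ⟨fun x hx => (hKL.1 x hx).imp fun y hy =>
      ⟨hy.1, hy.2.trans (min_le_right _ _)⟩, fun x hx => (hKL.2 x hx).imp fun y hy =>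
      ⟨hy.1, hy.2.trans (min_le_right _ _)⟩⟩
    have h1 := h L hL hLne m1
    have h2 := h' L hL hLne m2
    rw [add_sub_add_comm]
    exact (norm_add_le _ _).trans (by linarith)

theorem TV.zero : TV (fun _ : Set W => (0 : ℂ)) where
  empty := rfl
  val A B hA hB h := rfl
  trans A x hA := rfl
  rot u v hu hv A hA := rfl
  cont K hK hne ε hε := ⟨1, one_pos, fun L _ _ _ => by simpa using hε.le⟩

theorem TV.sum {ι : Type*} (s : Finset ι) {φ : ι → Set W → ℂ} (hφ : ∀ i, TV (φ i)) :
    TV (fun A => ∑ i ∈ s, φ i A) := by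
  classical
  induction s using Finset.induction_on with
  | empty => simpa using TV.zero
  | insert a s ha ih => simpa only [Finset.sum_insert ha] using (hφ a).add ih

end Linear

section Extend
variable {W : Type*} [NormedAddCommGroup W] [InnerProductSpace ℝ W]

open Classical in
/-- Extension of a function on convex bodies to all sets, by zero. -/
noncomputable def toSetFun (φ : ConvexBody W → ℂ) (A : Set W) : ℂ :=
  if h : CB A ∧ A.Nonempty then φ ⟨A, h.1.1, h.1.2, h.2⟩ else 0

theorem toSetFun_coe (φ : ConvexBody W → ℂ) (K : ConvexBody W) : toSetFun φ K = φ K :=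
  dif_pos ⟨⟨K.convex, K.isCompact⟩, K.nonempty⟩

theorem toSetFun_empty (φ : ConvexBody W → ℂ) : toSetFun φ ∅ = 0 :=
  dif_neg fun h => by simpa using h.2

/-- The convex body with underlying set `A`. -/
def body {A : Set W} (hA : CB A) (hne : A.Nonempty) : ConvexBody W := ⟨A, hA.1, hA.2, hne⟩

theorem coe_body {A : Set W} (hA : CB A) (hne : A.Nonempty) : (body hA hne : Set W) = A := rfl

theorem toSetFun_eq (φ : ConvexBody W → ℂ) {A : Set W} (hA : CB A) (hne : A.Nonempty) :
    toSetFun φ A = φ (body hA hne) := dif_pos ⟨hA, hne⟩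

/-- If a convex set is the union of two closed sets, any segment between them meets their
intersection. -/
theorem exists_mem_segment_inter {A B : Set W} (hA : IsClosed A) (hB : IsClosed B)
    (h : Convex ℝ (A ∪ B)) {a b : W} (ha : a ∈ A) (hb : b ∈ B) :
    (segment ℝ a b ∩ (A ∩ B)).Nonempty :=
  isPreconnected_closed_iff.1 (convex_segment a b).isPreconnected A B hA hB
    (h.segment_subset (Or.inl ha) (Or.inr hb)) ⟨a, left_mem_segment ℝ a b, ha⟩
    ⟨b, right_mem_segment ℝ a b, hb⟩

theorem TV.toSetFun [FiniteDimensional ℝ W] {φ : ConvexBody W → ℂ} (hφ : MemVal φ)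
    (hSO : ∀ g : W ≃ₗᵢ[ℝ] W, LinearEquiv.det g.toLinearEquiv = 1 →
      ∀ K, φ (ConvexBody.mapLin (g.toLinearEquiv : W →ₗ[ℝ] W) K) = φ K) :
    TV (toSetFun φ) where
  empty := toSetFun_empty φ
  val A B hA hB h := by
    rcases A.eq_empty_or_nonempty with rfl | hA'
    · simp [toSetFun_empty]
    rcases B.eq_empty_or_nonempty with rfl | hB'
    · simp [toSetFun_empty]
    have hAB : (A ∩ B).Nonempty := by
      obtain ⟨a, ha⟩ := hA'
      obtain ⟨b, hb⟩ := hB'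
      exact (exists_mem_segment_inter hA.2.isClosed hB.2.isClosed h ha hb).mono
        Set.inter_subset_right
    have hU : CB (A ∪ B) := ⟨h, hA.2.union hB.2⟩
    rw [toSetFun_eq φ hA hA', toSetFun_eq φ hB hB', toSetFun_eq φ (hA.inter hB) hAB,
      toSetFun_eq φ hU (hA'.mono Set.subset_union_left),
      hφ.1 (body hA hA') (body hB hB') (body hU _) (body (hA.inter hB) hAB) rfl rfl,
      sub_add_cancel]
  trans A x hA := by
    rcases A.eq_empty_or_nonempty with rfl | hA'
    · simp
    rw [toSetFun_eq φ hA hA', toSetFun_eq φ (hA.translate x) (hA'.image _),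
      ← hφ.2.1 (body hA hA') x]
    congr 1
    apply SetLike.coe_injective
    rw [ConvexBody.coe_add, coe_body, coe_body]
    change _ = A + {x}
    rw [Set.add_singleton]
    simp only [add_comm]
  rot u v hu hv A hA := by
    rcases A.eq_empty_or_nonempty with rfl | hA'
    · simp
    let g : W ≃ₗᵢ[ℝ] W := (ℝ ∙ v)ᗮ.reflection.trans (ℝ ∙ u)ᗮ.reflection
    have hdet : ∀ w : W, w ≠ 0 → LinearEquiv.det (ℝ ∙ w)ᗮ.reflection.toLinearEquiv = -1 := by
      intro w hw
      rw [Submodule.linearEquiv_det_reflection, Submodule.orthogonal_orthogonal,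
        finrank_span_singleton hw, pow_one]
    have hg : LinearEquiv.det g.toLinearEquiv = 1 := by
      have : g.toLinearEquiv = (ℝ ∙ u)ᗮ.reflection.toLinearEquiv *
        (ℝ ∙ v)ᗮ.reflection.toLinearEquiv := rfl
      rw [this, map_mul, hdet u hu, hdet v hv]
      simp
    rw [toSetFun_eq φ hA hA', toSetFun_eq φ ((hA.image _).image _) ((hA'.image _).image _),
      ← hSO g hg (body hA hA')]
    congr 1
    apply SetLike.coe_injective
    change refl u '' (refl v '' A) = g '' A
    rw [Set.image_image]
    refine Set.image_congr fun x _ => ?_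
    rw [← reflection_eq_refl, ← reflection_eq_refl]
    rfl
  cont K hK hne ε hε := by
    obtain ⟨δ, hδ, h⟩ := Metric.continuous_iff.1 hφ.2.2 (body hK hne) ε hε
    refine ⟨δ / 2, by positivity, fun L hL hLne hKL => ?_⟩
    rw [toSetFun_eq φ hK hne, toSetFun_eq φ hL hLne, ← dist_eq_norm]
    refine (h _ ?_).le
    rw [← ConvexBody.hausdorffDist_coe, hausdorffDist_comm]
    exact (hausdorffDist_le_of_mem_dist (by positivity) hKL.1 fun y hy =>
      (hKL.2 y hy).imp fun x hx => ⟨hx.1, by rw [dist_comm]; exact hx.2⟩).trans_lt (by linarith)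

end Extend

section Volume
variable {n : ℕ}

/-- The volume of the parallel set of `A` at distance `ε`. -/
noncomputable def parVol (ε : ℝ) (A : Set (EuclideanSpace ℝ (Fin n))) : ℝ := (volume (A + closedBall 0 ε)).toReal

theorem CB.closedBall (ε : ℝ) : CB (closedBall (0 : EuclideanSpace ℝ (Fin n)) ε) :=
  ⟨convex_closedBall _ _, isCompact_closedBall _ _⟩

/-- Forming parallel sets commutes with the intersection of two bodies whose union is convex; this
makes the volume of parallel sets a valuation. -/
theorem inter_add_ball {A B : Set (EuclideanSpace ℝ (Fin n))} (hA : CB A) (hB : CB B) (h : Convex ℝ (A ∪ B)) (ε : ℝ) :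
    A ∩ B + closedBall 0 ε = (A + closedBall 0 ε) ∩ (B + closedBall 0 ε) := by
  apply Set.Subset.antisymm
  · exact Set.subset_inter (Set.add_subset_add_right Set.inter_subset_left)
      (Set.add_subset_add_right Set.inter_subset_right)
  rintro z ⟨⟨a, ha, d, hd, rfl⟩, b, hb, d', hd', hz⟩
  obtain ⟨c, hc, hcAB⟩ := exists_mem_segment_inter hA.2.isClosed hB.2.isClosed h ha hb
  refine ⟨c, hcAB, a + d - c, ?_, by simp⟩
  obtain ⟨s, t, hs, ht, hst, rfl⟩ := hc
  have : a + d - (s • a + t • b) = s • d + t • d' := by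
    have h1 : a + d = s • (a + d) + t • (a + d) := by rw [← add_smul, hst, one_smul]
    have h2 : t • (a + d) = t • (b + d') := congrArg (t • ·) hz.symm
    rw [h1, h2, smul_add, smul_add]
    abel
  rw [this]
  exact (CB.closedBall ε).1 hd hd' hs ht hst

theorem parVol_isometry (g : EuclideanSpace ℝ (Fin n) ≃ₗᵢ[ℝ] EuclideanSpace ℝ (Fin n)) (ε : ℝ) (A : Set (EuclideanSpace ℝ (Fin n))) :
    parVol ε (g '' A) = parVol ε A := by
  have h : g '' A + closedBall 0 ε = g '' (A + closedBall 0 ε) := by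
    rw [Set.image_add, g.image_closedBall, map_zero]
  rw [parVol, h, parVol, g.image_eq_preimage_symm]
  have := g.symm.measurePreserving.measure_preimage_equiv (f := g.symm.toMeasurableEquiv)
    (A + closedBall 0 ε)
  exact congrArg ENNReal.toReal this

theorem parVol_mono {ε ε' : ℝ} {A B : Set (EuclideanSpace ℝ (Fin n))} (hB : CB B)
    (h : A + closedBall 0 ε ⊆ B + closedBall 0 ε') : parVol ε A ≤ parVol ε' B :=
  ENNReal.toReal_mono (hB.add (CB.closedBall ε')).2.measure_lt_top.ne (measure_mono h)

theorem add_ball_subset {ε δ : ℝ} {A B : Set (EuclideanSpace ℝ (Fin n))}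
    (h : ∀ x ∈ A, ∃ y ∈ B, dist x y ≤ δ) :
    A + closedBall 0 ε ⊆ B + closedBall 0 (ε + δ) := by
  rintro _ ⟨x, hx, d, hd, rfl⟩
  obtain ⟨y, hy, hxy⟩ := h x hx
  refine ⟨y, hy, x - y + d, ?_, by abel_nf⟩
  rw [mem_closedBall_zero_iff] at hd ⊢
  rw [dist_eq_norm] at hxy
  exact (norm_add_le _ _).trans (by linarith)

/-- The volume of the parallel set at a fixed positive distance is a translation and rotation
invariant valuation; continuity in the body follows from continuity in the distance, because
parallel sets of close bodies are nested up to a small change of the distance. -/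
theorem TV.parVol {ε : ℝ} (hε : 0 < ε)
    (hcont : ∀ K : Set (EuclideanSpace ℝ (Fin n)), CB K → K.Nonempty → ∃ P : ℝ → ℝ, Continuous P ∧
      ∀ t, 0 ≤ t → parVol t K = P t) :
    TV (fun A : Set (EuclideanSpace ℝ (Fin n)) => (parVol ε A : ℂ)) where
  empty := by simp [Hadwiger.parVol]
  val A B hA hB h := by
    have hA' := (hA.add (CB.closedBall ε)).2
    have hB' := (hB.add (CB.closedBall ε)).2
    norm_cast
    rw [Hadwiger.parVol, Hadwiger.parVol, Hadwiger.parVol, Hadwiger.parVol,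
      inter_add_ball hA hB h, Set.union_add,
      ← ENNReal.toReal_add (hA'.union hB').measure_lt_top.ne
        (hA'.inter hB').measure_lt_top.ne,
      ← ENNReal.toReal_add hA'.measure_lt_top.ne hB'.measure_lt_top.ne,
      measure_union_add_inter _ hB'.measurableSet]
  trans A x hA := by
    have : (fun y => x + y) '' A + closedBall 0 ε = (fun y => x + y) '' (A + closedBall 0 ε) := by
      rw [← Set.singleton_add, ← Set.singleton_add, add_assoc]
    rw [Hadwiger.parVol, this, Set.image_add_left, measure_preimage_add, Hadwiger.parVol]
  rot u v hu hv A hA := by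
    have h : ∀ (u : EuclideanSpace ℝ (Fin n)) (A : Set (EuclideanSpace ℝ (Fin n))), refl u '' A = (ℝ ∙ u)ᗮ.reflection '' A := fun u A =>
      Set.image_congr fun x _ => (reflection_eq_refl u x).symm
    beta_reduce
    rw [h, h, parVol_isometry, parVol_isometry]
  cont K hK hne η hη := by
    obtain ⟨P, hP, hPK⟩ := hcont K hK hne
    obtain ⟨δ, hδ, h⟩ := Metric.continuous_iff.1 hP ε η hη
    have hm : 0 < min (δ / 2) ε := lt_min (by positivity) hε
    refine ⟨min (δ / 2) ε, hm, fun L hL hLne hKL => ?_⟩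
    set ρ := min (δ / 2) ε
    have hρ : ρ ≤ δ / 2 := min_le_left _ _
    have hρ' : ρ ≤ ε := min_le_right _ _
    have h1 : Hadwiger.parVol (ε - ρ) K ≤ Hadwiger.parVol ε L := by
      refine parVol_mono hL ?_
      have := add_ball_subset (ε := ε - ρ) hKL.1
      rwa [sub_add_cancel] at this
    have h2 : Hadwiger.parVol ε L ≤ Hadwiger.parVol (ε + ρ) K :=
      parVol_mono hK (add_ball_subset fun y hy => (hKL.2 y hy).imp fun x hx =>
        ⟨hx.1, by rw [dist_comm]; exact hx.2⟩)
    rw [hPK _ (by linarith)] at h1 h2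
    have h3 := h (ε - ρ) (by rw [Real.dist_eq, abs_lt]; constructor <;> linarith)
    have h4 := h (ε + ρ) (by rw [Real.dist_eq, abs_lt]; constructor <;> linarith)
    rw [Real.dist_eq, abs_lt] at h3 h4
    rw [← Complex.ofReal_sub, Complex.norm_real, Real.norm_eq_abs, hPK ε hε.le, abs_le]
    constructor <;> linarith

/-- The coefficients of a polynomial of degree at most `n` are fixed linear combinations of its
values at `1, …, n + 1`; here `x i` is the coefficient of degree `n - i`. -/
theorem exists_coeff (n : ℕ) : ∃ a : Fin (n + 1) → Fin (n + 1) → ℝ, ∀ x s : Fin (n + 1) → ℝ,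
    (∀ k, s k = ∑ i : Fin (n + 1), ((k : ℕ) + 1 : ℝ) ^ (n - (i : ℕ)) * x i) →
    ∀ i, x i = ∑ k, a i k * s k := by
  let M : Matrix (Fin (n + 1)) (Fin (n + 1)) ℝ :=
    Matrix.vandermonde fun k : Fin (n + 1) => ((k : ℕ) + 1 : ℝ)
  have hM : IsUnit M.det := by
    rw [isUnit_iff_ne_zero, Matrix.det_vandermonde_ne_zero_iff]
    intro i j h
    simpa [Fin.ext_iff] using h
  refine ⟨fun i k => M⁻¹ i.rev k, fun x s h i => ?_⟩
  have hs : s = M.mulVec (fun j => x j.rev) := by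
    funext k
    rw [h k, ← Equiv.sum_comp Fin.revPerm]
    refine Finset.sum_congr rfl fun j _ => ?_
    simp only [Fin.revPerm_apply, M, Matrix.vandermonde_apply, Fin.val_rev]
    congr 2
    omega
  have h2 : M⁻¹.mulVec s = fun j => x j.rev := by
    rw [hs, Matrix.mulVec_mulVec, Matrix.nonsing_inv_mul _ hM, Matrix.one_mulVec]
  have h3 := congrFun h2 i.rev
  simp only [Fin.rev_rev] at h3
  rw [← h3]
  rfl

theorem parVol_ball {ε r : ℝ} (hε : 0 ≤ ε) (hr : 0 ≤ r) : parVol ε (closedBall (0 : EuclideanSpace ℝ (Fin n)) r) =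
    (r + ε) ^ n * (volume (closedBall (0 : EuclideanSpace ℝ (Fin n)) 1)).toReal := by
  rw [parVol, closedBall_add_closedBall hr hε, zero_add,
    Measure.addHaar_closedBall' _ _ (add_nonneg hr hε), ENNReal.toReal_mul,
    ENNReal.toReal_ofReal (by positivity), finrank_euclideanSpace_fin]

end Volume

/-! ### The classification -/

theorem omega_pos (k : ℕ) : 0 < (volume (closedBall (0 : EuclideanSpace ℝ (Fin k)) 1)).toReal :=
  ENNReal.toReal_pos (measure_closedBall_pos _ _ one_pos).ne'
    (isCompact_closedBall _ _).measure_lt_top.ne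

end Hadwiger

open Hadwiger in
/-- **Hadwiger's classification theorem.** Let `V_0, …, V_n` be the intrinsic volumes on
Euclidean `ℝⁿ`, defined by the Steiner formula
`vol (K + ε D) = ∑_{i=0}^n ε^{n-i} ω_{n-i} V_i(K)` (`ε ≥ 0`, `D` the unit ball, `ω_j` the volume
of the `j`-dimensional unit ball). Every translation invariant continuous valuation `φ` that is
`SO(n)`-invariant is a linear combination `φ = ∑_{i=0}^n c_i V_i`; in particular `φ` is
automatically `O(n)`-invariant. -/
theorem hadwiger_classification (n : ℕ)
    (Vf : Fin (n + 1) → ConvexBody (EuclideanSpace ℝ (Fin n)) → ℝ)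
    (hSteiner : ∀ (K : ConvexBody (EuclideanSpace ℝ (Fin n))) (ε : ℝ), 0 ≤ ε →
      (volume ((K + ε • unitBallBody (EuclideanSpace ℝ (Fin n)) :
          ConvexBody (EuclideanSpace ℝ (Fin n))) : Set (EuclideanSpace ℝ (Fin n)))).toReal =
        ∑ i : Fin (n + 1), ε ^ (n - (i : ℕ)) *
          (volume (closedBall (0 : EuclideanSpace ℝ (Fin (n - (i : ℕ)))) 1)).toReal * Vf i K)
    (φ : ConvexBody (EuclideanSpace ℝ (Fin n)) → ℂ) (hφ : MemVal φ)
    (hSO : ∀ g : EuclideanSpace ℝ (Fin n) ≃ₗᵢ[ℝ] EuclideanSpace ℝ (Fin n),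
      LinearEquiv.det g.toLinearEquiv = 1 →
      ∀ K, φ (ConvexBody.mapLin (g.toLinearEquiv :
        EuclideanSpace ℝ (Fin n) →ₗ[ℝ] EuclideanSpace ℝ (Fin n)) K) = φ K) :
    (∃ c : Fin (n + 1) → ℂ, ∀ K, φ K = ∑ i, c i * (Vf i K : ℂ)) ∧
    (∀ g : EuclideanSpace ℝ (Fin n) ≃ₗᵢ[ℝ] EuclideanSpace ℝ (Fin n),
      ∀ K, φ (ConvexBody.mapLin (g.toLinearEquiv :
        EuclideanSpace ℝ (Fin n) →ₗ[ℝ] EuclideanSpace ℝ (Fin n)) K) = φ K) := by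
  set ω : ℕ → ℝ := fun k => (volume (closedBall (0 : EuclideanSpace ℝ (Fin k)) 1)).toReal
    with hω
  have hωpos : ∀ k, 0 < ω k := omega_pos
  have hSt : ∀ (K : ConvexBody (EuclideanSpace ℝ (Fin n))) (ε : ℝ), 0 ≤ ε →
      parVol ε (K : Set (EuclideanSpace ℝ (Fin n))) =
        ∑ i : Fin (n + 1), ε ^ (n - (i : ℕ)) * (ω (n - (i : ℕ)) * Vf i K) := by
    intro K ε hε
    have h := hSteiner K ε hε
    have hb : ((K + ε • unitBallBody (EuclideanSpace ℝ (Fin n)) :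
        ConvexBody (EuclideanSpace ℝ (Fin n))) : Set (EuclideanSpace ℝ (Fin n))) =
        (K : Set (EuclideanSpace ℝ (Fin n))) + closedBall 0 ε := by
      rw [ConvexBody.coe_add, ConvexBody.coe_smul]
      change _ + ε • closedBall (0 : EuclideanSpace ℝ (Fin n)) 1 = _
      rw [smul_unitClosedBall_of_nonneg hε]
    rw [hb] at h
    rw [parVol, h]
    exact Finset.sum_congr rfl fun i _ => mul_assoc _ _ _
  obtain ⟨a, ha⟩ := exists_coeff n
  -- The intrinsic volumes as linear combinations of volumes of parallel sets.
  let U : Fin (n + 1) → Set (EuclideanSpace ℝ (Fin n)) → ℝ := fun i A =>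
    ∑ k : Fin (n + 1), (ω (n - (i : ℕ)))⁻¹ * a i k * parVol ((k : ℕ) + 1 : ℝ) A
  have hU : ∀ i (K : ConvexBody (EuclideanSpace ℝ (Fin n))), Vf i K = U i K := by
    intro i K
    have h := ha (fun i => ω (n - (i : ℕ)) * Vf i K)
      (fun k => parVol ((k : ℕ) + 1 : ℝ) (K : Set (EuclideanSpace ℝ (Fin n))))
      (fun k => hSt K _ (by positivity)) i
    simp only [U, mul_assoc, ← Finset.mul_sum]
    rw [← h, inv_mul_cancel_left₀ (hωpos _).ne']
  have hUTV : ∀ i, TV (fun A => (U i A : ℂ)) := by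
    intro i
    have h : ∀ k : Fin (n + 1), TV fun A : Set (EuclideanSpace ℝ (Fin n)) =>
        ((ω (n - (i : ℕ)))⁻¹ * a i k : ℂ) * (parVol ((k : ℕ) + 1 : ℝ) A : ℂ) := fun k =>
      (TV.parVol (by positivity) fun K hK hne =>
        ⟨fun t => ∑ i : Fin (n + 1), t ^ (n - (i : ℕ)) * (ω (n - (i : ℕ)) * Vf i (body hK hne)),
          by fun_prop, fun t ht => hSt (body hK hne) t ht⟩).const_mul _
    have h2 := TV.sum Finset.univ h
    simpa [U] using h2
  have hcomb : ∀ c : Fin (n + 1) → ℂ, TV (fun A => ∑ i, c i * (U i A : ℂ)) := fun c =>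
    TV.sum Finset.univ fun i => (hUTV i).const_mul (c i)
  -- On balls the intrinsic volumes are nonzero monomials of distinct degrees in the radius.
  have hball : ∀ (i : Fin (n + 1)) (r : ℝ), 0 ≤ r → U i (closedBall 0 r) =
      (n.choose i * ω n / ω (n - (i : ℕ))) * r ^ (i : ℕ) := by
    intro i r hr
    have h := ha (fun i => n.choose i * ω n * r ^ (i : ℕ))
      (fun k => parVol ((k : ℕ) + 1 : ℝ) (closedBall (0 : EuclideanSpace ℝ (Fin n)) r)) ?_ i
    · simp only [U, mul_assoc, ← Finset.mul_sum]
      rw [← h]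
      field_simp
    · intro k
      rw [parVol_ball (by positivity) hr, add_pow, Finset.sum_mul, Finset.sum_range]
      exact Finset.sum_congr rfl fun i _ => by ring
  let b := EuclideanSpace.basisFun (Fin n) ℝ
  let M : Matrix (Fin (n + 1)) (Fin (n + 1)) ℂ := fun j i => (U i (stdCube b j) : ℂ)
  have hM : Function.Injective M.mulVec := by
    rw [← Matrix.coe_mulVecLin, ← LinearMap.ker_eq_bot, LinearMap.ker_eq_bot']
    intro c hc
    have hz : ∀ r : ℝ, 0 ≤ r → ∑ i, c i * (U i (closedBall 0 r) : ℂ) = 0 := fun r _ =>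
      (hcomb c).eq_zero b (fun j hj => by
        have := congrFun hc ⟨j, Nat.lt_succ_of_le hj⟩
        rw [Matrix.mulVecLin_apply] at this
        simpa only [M, Matrix.mulVec, dotProduct, mul_comm, Pi.zero_apply] using this) (CB.closedBall r)
    have hv := Matrix.eq_zero_of_forall_index_sum_mul_pow_eq_zero
      (f := fun k : Fin (n + 1) => ((k : ℕ) : ℂ))
      (v := fun i => c i * (n.choose i * ω n / ω (n - (i : ℕ)))) ?_ ?_
    · funext i
      have h := congrFun hv i
      have h1 : (n.choose i : ℂ) ≠ 0 :=
        Nat.cast_ne_zero.2 (Nat.choose_pos (Nat.lt_succ_iff.1 i.2)).ne'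
      have h2 : ∀ k, (ω k : ℂ) ≠ 0 := fun k => Complex.ofReal_ne_zero.2 (hωpos k).ne'
      simpa [h1, h2] using h
    · intro i j h
      simpa [Fin.ext_iff] using h
    · intro k
      rw [← hz k (Nat.cast_nonneg _)]
      refine Finset.sum_congr rfl fun i _ => ?_
      rw [hball i _ (Nat.cast_nonneg _)]
      push_cast
      ring
  obtain ⟨c, hc⟩ := Matrix.mulVec_surjective_iff_isUnit.2
    (Matrix.mulVec_injective_iff_isUnit.1 hM) fun j => toSetFun φ (stdCube b j)
  have hmain : ∀ K, φ K = ∑ i, c i * (Vf i K : ℂ) := by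
    intro K
    have h := ((TV.toSetFun hφ hSO).add ((hcomb c).const_mul (-1))).eq_zero b
      (fun j hj => by
        have := congrFun hc ⟨j, Nat.lt_succ_of_le hj⟩
        simp only [M, Matrix.mulVec, dotProduct] at this
        rw [← this, neg_one_mul, ← sub_eq_add_neg, sub_eq_zero]
        exact Finset.sum_congr rfl fun i _ => mul_comm _ _)
      (A := K) ⟨K.convex, K.isCompact⟩
    rw [toSetFun_coe, neg_one_mul, ← sub_eq_add_neg, sub_eq_zero] at h
    rw [h]
    exact Finset.sum_congr rfl fun i _ => by rw [hU]
  refine ⟨⟨c, hmain⟩, fun g K => ?_⟩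
  rw [hmain, hmain]
  refine Finset.sum_congr rfl fun i _ => ?_
  rw [hU, hU]
  congr 2
  refine Finset.sum_congr rfl fun k _ => ?_
  congr 1
  exact parVol_isometry g _ _
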